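/- arXiv:1702.00779 — 4 statements merged into one kernel-verified Lean document; each statement's English description precedes it below -/
import Mathlib

section
/- Let k be a field, p ∈ k[t] an irreducible polynomial, and k_p = k[t]/(p) the residue field. If v ∈ k[t][x,y] is a variable of the k(t)-algebra k(t)[x,y] (i.e., some k(t)-algebra automorphism of k(t)[x,y] sends v to x), then the class v₀ of v in k_p[x,y] (obtained by reducing coefficients modulo p) belongs to the subalgebra k_p[w] for some variable w of the k_p-algebra k_p[x,y]. -/
open MvPolynomial

noncomputable section


namespace RedVar

/-- The polynomial ring in two variables. -/
abbrev B (R : Type*) [CommRing R] := MvPolynomial (Fin 2) R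

/-- `f` is invariant under some nontrivial polynomial deformation of the identity. -/
def Inv (K : Type*) [Field K] (f : B K) : Prop :=
  ∃ φ : B K →ₐ[K] Polynomial (B K), (∀ g, (φ g).eval 0 = g) ∧
    (∃ i, φ (X i) ≠ Polynomial.C (X i)) ∧ φ f = Polynomial.C f

lemma eq_C_of {R : Type*} [CommRing R] {q : Polynomial R} {g : R} (h0 : q.eval 0 = g)
    (h : q.natDegree = 0) : q = Polynomial.C g := by
  rw [Polynomial.eq_C_of_natDegree_eq_zero h] at h0 ⊢
  simpa using h0

lemma algHom_eq_C {K : Type*} [Field K] (φ : B K →ₐ[K] Polynomial (B K))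
    (h : ∀ i, φ (X i) = Polynomial.C (X i)) (g : B K) : φ g = Polynomial.C g := by
  have : φ = (Polynomial.CAlgHom : B K →ₐ[B K] Polynomial (B K)).restrictScalars K := by
    apply MvPolynomial.algHom_ext
    intro i
    simpa using h i
  rw [this]; simp

lemma inv_of {K : Type*} [Field K] (P : Fin 2 → Polynomial (B K)) (f : B K)
    (h0 : ∀ i, (P i).eval 0 = X i) (h1 : ∃ i, P i ≠ Polynomial.C (X i))
    (h2 : aeval P f = Polynomial.C f) : Inv K f := by
  refine ⟨aeval P, ?_, by simpa using h1, h2⟩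
  intro g
  have : ((Polynomial.aeval (0 : B K)).restrictScalars K).comp (aeval P) = AlgHom.id K (B K) := by
    apply MvPolynomial.algHom_ext
    intro i
    simpa [Polynomial.coe_aeval_eq_eval] using h0 i
  have := DFunLike.congr_fun this g
  simpa [Polynomial.coe_aeval_eq_eval] using this

lemma Inv.conj {K : Type*} [Field K] {f : B K} (h : Inv K f) (σ : B K ≃ₐ[K] B K) :
    Inv K (σ f) := by
  obtain ⟨φ, h0, h1, h2⟩ := h
  refine ⟨(Polynomial.mapAlgHom σ.toAlgHom).comp (φ.comp σ.symm.toAlgHom), ?_, ?_, ?_⟩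
  · intro g
    have : Polynomial.eval 0 (Polynomial.map (σ : B K →+* B K) (φ (σ.symm g))) = g := by
      have := Polynomial.eval_map_apply (f := (σ : B K →+* B K)) (p := φ (σ.symm g)) 0
      rw [map_zero] at this
      rw [this, h0]; simp
    simpa using this
  · by_contra hc
    push Not at hc
    obtain ⟨i, hi⟩ := h1
    apply hi
    have := algHom_eq_C _ hc (σ (X i))
    have h3 : Polynomial.map (σ : B K →+* B K) (φ (X i)) = Polynomial.map (σ : B K →+* B K) (Polynomial.C (X i)) := by
      simpa using this
    exact Polynomial.map_injective _ σ.injective h3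
  · have : Polynomial.map (σ : B K →+* B K) (φ f) = Polynomial.C (σ f) := by
      rw [h2]; simp
    simpa using this

lemma Inv.smul {K : Type*} [Field K] {f : B K} (h : Inv K f) (c : K) :
    Inv K (C c * f) := by
  obtain ⟨φ, h0, h1, h2⟩ := h
  refine ⟨φ, h0, h1, ?_⟩
  rw [map_mul, h2, ← MvPolynomial.algebraMap_eq, φ.commutes]
  rw [Polynomial.C_mul]
  rfl

lemma inv_X (K : Type*) [Field K] : Inv K (X 0 : B K) := by
  refine inv_of ![Polynomial.C (X 0), Polynomial.C (X 1) + Polynomial.X] _ ?_ ⟨1, ?_⟩ ?_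
  · intro i; fin_cases i <;> simp
  · simp
  · simp

lemma aeval_nat {R S : Type*} [CommRing R] [CommRing S] (f : R →+* S)
    (P : Fin 2 → Polynomial (B R)) (v : B R) :
    Polynomial.map (MvPolynomial.map f) (aeval P v) =
      aeval (fun i => Polynomial.map (MvPolynomial.map f) (P i)) (MvPolynomial.map f v) := by
  induction v using MvPolynomial.induction_on with
  | C a =>
    simp only [MvPolynomial.algHom_C, MvPolynomial.map_C]
    simp [Polynomial.algebraMap_apply, MvPolynomial.algebraMap_eq]
  | add p q hp hq => simp [hp, hq]
  | mul_X p i hp => simp [hp]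

lemma Inv.baseChange {K L : Type*} [Field K] [Field L] (j : K →+* L) {f : B K} (h : Inv K f) :
    Inv L (MvPolynomial.map j f) := by
  obtain ⟨φ, h0, ⟨i, hi⟩, h2⟩ := h
  have hφ : φ = aeval (fun i => φ (X i)) := by
    apply MvPolynomial.algHom_ext; simp
  refine inv_of (fun i => Polynomial.map (MvPolynomial.map j) (φ (X i))) _ ?_ ⟨i, ?_⟩ ?_
  · intro i
    have := Polynomial.eval_map_apply (f := (MvPolynomial.map j : B K →+* B L)) (p := φ (X i)) 0
    rw [map_zero] at this
    rw [this, h0]; simp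
  · intro hc
    apply hi
    apply Polynomial.map_injective _ (MvPolynomial.map_injective j j.injective)
    rw [hc]; simp
  · rw [← aeval_nat, ← hφ, h2]; simp


/-- Scaling of the polynomial variable. -/
def scl {R : Type*} [CommRing R] (c : R) : Polynomial R →+* Polynomial R :=
  Polynomial.eval₂RingHom Polynomial.C (Polynomial.C c * Polynomial.X)

lemma coeff_scl {R : Type*} [CommRing R] (c : R) (q : Polynomial R) (l : ℕ) :
    (scl c q).coeff l = q.coeff l * c ^ l := by
  have : scl c q = q.comp (Polynomial.C c * Polynomial.X) := rfl
  rw [this, Polynomial.comp_C_mul_X_coeff]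

lemma aeval_scl {R : Type*} [CommRing R] (c : B R) (P : Fin 2 → Polynomial (B R)) (v : B R) :
    scl c (aeval P v) = aeval (fun i => scl c (P i)) v := by
  induction v using MvPolynomial.induction_on with
  | C a =>
    simp only [MvPolynomial.algHom_C]
    simp [Polynomial.algebraMap_apply, MvPolynomial.algebraMap_eq, scl]
  | add p q hp hq => simp [hp, hq]
  | mul_X p i hp => simp [hp]

lemma root_regular {A : Type*} [CommRing A] [IsDomain A] (z : A) (hz : z ≠ 0) (n : ℕ) (hn : 0 < n)
    (x : AdjoinRoot (Polynomial.X ^ n - Polynomial.C z))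
    (h : AdjoinRoot.root (Polynomial.X ^ n - Polynomial.C z) * x = 0) : x = 0 := by
  have hm : (Polynomial.X ^ n - Polynomial.C z).Monic :=
    Polynomial.monic_X_pow_sub_C z hn.ne'
  have hfree := hm.free_adjoinRoot
  have h1 : (AdjoinRoot.root (Polynomial.X ^ n - Polynomial.C z)) ^ n = AdjoinRoot.of _ z := by
    have := AdjoinRoot.eval₂_root (Polynomial.X ^ n - Polynomial.C z)
    rw [Polynomial.eval₂_sub, Polynomial.eval₂_C, Polynomial.eval₂_X_pow] at this
    exact sub_eq_zero.mp this
  have h2 : z • x = 0 := by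
    rw [Algebra.smul_def]
    change AdjoinRoot.of _ z * x = 0
    rw [← h1]
    obtain ⟨r, hr⟩ : ∃ r, n = r + 1 := ⟨n - 1, by omega⟩
    have h3 : ∀ y : AdjoinRoot (Polynomial.X ^ n - Polynomial.C z), y ^ n = y ^ r * y := by
      intro y; rw [← pow_succ]; congr 1
    rw [h3, mul_assoc, h, mul_zero]
  exact (smul_eq_zero.mp h2).resolve_left hz

lemma degen1 {A κ : Type*} [CommRing A] [IsDomain A] [Field κ] (π : A →+* κ) (z : A)
    (hz : z ≠ 0) (hπ : π z = 0) (v : B A) (G : Fin 2 → Polynomial (B A))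
    (hv : aeval G v = Polynomial.C v) (d : Fin 2 → ℕ → B A) (e : Fin 2 → ℕ → ℕ)
    (l0 E : ℕ) (i0 : Fin 2) (hl0 : 0 < l0)
    (hG : ∀ i l, (G i).coeff l = C (z ^ e i l) * d i l)
    (hE : ∀ i l, E * l ≤ l0 * e i l) (hd0 : ∀ i, d i 0 = X i) (he0 : ∀ i, e i 0 = 0)
    (heE : e i0 l0 = E) (hne : MvPolynomial.map π (d i0 l0) ≠ 0) :
    Inv κ (MvPolynomial.map π v) := by
  set m : Polynomial A := Polynomial.X ^ l0 - Polynomial.C z with hm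
  set ζ := AdjoinRoot.root m with hζ
  let ι : A →+* AdjoinRoot m := AdjoinRoot.of m
  have hζl : ζ ^ l0 = ι z := by
    have := AdjoinRoot.eval₂_root m
    rw [hm, Polynomial.eval₂_sub, Polynomial.eval₂_C, Polynomial.eval₂_X_pow] at this
    exact sub_eq_zero.mp this
  let ρ : AdjoinRoot m →+* κ := AdjoinRoot.lift π 0 (by
    simp [hm, hπ, hl0.ne'])
  have hρζ : ρ ζ = 0 := AdjoinRoot.lift_root _
  have hρι : ρ.comp ι = π := AdjoinRoot.lift_comp_of _
  let P : Fin 2 → Polynomial (B (AdjoinRoot m)) := fun i =>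
    ∑ l ∈ Finset.range ((G i).natDegree + 1), Polynomial.monomial l
      (MvPolynomial.map ι (d i l) * C (ζ ^ (l0 * e i l - E * l)))
  have hPc : ∀ i l, l ≤ (G i).natDegree → (P i).coeff l =
      MvPolynomial.map ι (d i l) * C (ζ ^ (l0 * e i l - E * l)) := by
    intro i l hl
    simp only [P, Polynomial.finsetSum_coeff, Polynomial.coeff_monomial]
    rw [Finset.sum_ite_eq' ]
    simp [hl]
  have hPc' : ∀ i l, (G i).natDegree < l → (P i).coeff l = 0 := by
    intro i l hl
    simp only [P, Polynomial.finsetSum_coeff, Polynomial.coeff_monomial]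
    rw [Finset.sum_ite_eq' ]
    simp [hl]
  have hS : ∀ i, scl (C (ζ ^ E)) (P i) = Polynomial.map (MvPolynomial.map ι) (G i) := by
    intro i
    ext1 l
    rw [coeff_scl, Polynomial.coeff_map]
    by_cases hl : l ≤ (G i).natDegree
    · rw [hPc i l hl, hG, map_mul, MvPolynomial.map_C, map_pow ι, ← hζl, mul_assoc,
        ← map_pow C (ζ ^ E), ← map_mul, mul_comm]
      congr 2
      rw [← pow_mul, ← pow_add, ← pow_mul, Nat.sub_add_cancel (hE i l)]
    · rw [hPc' i l (by omega), Polynomial.coeff_eq_zero_of_natDegree_lt (by omega)]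
      simp
  have hinj : ∀ q : Polynomial (B (AdjoinRoot m)), scl (C (ζ ^ E)) q = 0 → q = 0 := by
    have hr : ∀ n x, ζ ^ n * x = 0 → x = 0 := by
      intro n
      induction n with
      | zero => simp
      | succ n ih =>
        intro x hx
        rw [pow_succ, mul_assoc] at hx
        exact root_regular z hz l0 hl0 x (ih _ hx)
    intro q hq
    ext l s
    have := congrArg (fun q => MvPolynomial.coeff s (Polynomial.coeff q l)) hq
    simp only [coeff_scl, Polynomial.coeff_zero, MvPolynomial.coeff_zero] at this
    rw [← map_pow, mul_comm, MvPolynomial.coeff_C_mul, ← pow_mul] at this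
    simpa using hr _ _ this
  have hPv : aeval P (MvPolynomial.map ι v) = Polynomial.C (MvPolynomial.map ι v) := by
    rw [← sub_eq_zero]
    apply hinj
    rw [map_sub, aeval_scl, funext hS, ← aeval_nat, hv]
    simp [scl]
  have hmm : ∀ q : B A, MvPolynomial.map ρ (MvPolynomial.map ι q) = MvPolynomial.map π q := by
    intro q; rw [MvPolynomial.map_map, hρι]
  refine inv_of (fun i => Polynomial.map (MvPolynomial.map ρ) (P i)) _ ?_ ⟨i0, ?_⟩ ?_
  · intro i
    rw [← Polynomial.coeff_zero_eq_eval_zero, Polynomial.coeff_map, hPc i 0 (Nat.zero_le _), hd0, he0]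
    simp
  · intro hc
    have hle : l0 ≤ (G i0).natDegree := by
      apply Polynomial.le_natDegree_of_ne_zero
      rw [hG]
      apply mul_ne_zero
      · simp [hz]
      · intro h; rw [h] at hne; simp at hne
    have := congrArg (fun q => Polynomial.coeff q l0) hc
    simp only [Polynomial.coeff_map] at this
    rw [hPc i0 l0 hle, heE, mul_comm E, Nat.sub_self, Polynomial.coeff_C_of_ne_zero hl0.ne'] at this
    simp only [pow_zero, C_1, mul_one] at this
    rw [hmm] at this
    exact hne this
  · rw [← hmm, ← aeval_nat, hPv]
    simp


lemma exists_mult {k κ : Type*} [Field k] [Field κ] (p : Polynomial k) (hp : Irreducible p)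
    (π : Polynomial k →+* κ) (hπ : ∀ a, π a = 0 ↔ p ∣ a) (q : B (Polynomial k)) (hq : q ≠ 0) :
    ∃ (e : ℕ) (d : B (Polynomial k)), q = C (p ^ e) * d ∧ MvPolynomial.map π d ≠ 0 := by
  have hu : ¬ IsUnit (C p : B (Polynomial k)) := by
    intro h
    have := h.map (MvPolynomial.constantCoeff (R := Polynomial k) (σ := Fin 2))
    simp only [MvPolynomial.constantCoeff_C] at this
    exact hp.not_isUnit this
  have hf : FiniteMultiplicity (C p : B (Polynomial k)) q :=
    FiniteMultiplicity.of_not_isUnit hu hq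
  obtain ⟨d, hd, hnd⟩ := hf.exists_eq_pow_mul_and_not_dvd
  refine ⟨_, d, by rw [map_pow]; exact hd, ?_⟩
  intro h
  apply hnd
  rw [MvPolynomial.C_dvd_iff_dvd_coeff]
  intro s
  rw [← hπ, ← MvPolynomial.coeff_map, h, MvPolynomial.coeff_zero]

lemma degen {k κ : Type*} [Field k] [Field κ] (p : Polynomial k) (hp : Irreducible p)
    (π : Polynomial k →+* κ) (hπ : ∀ a, π a = 0 ↔ p ∣ a) (v : B (Polynomial k))
    (h : Inv (RatFunc k) (MvPolynomial.map (algebraMap (Polynomial k) (RatFunc k)) v)) :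
    Inv κ (MvPolynomial.map π v) := by
  obtain ⟨φ, h0, ⟨j0, hj0⟩, h2⟩ := h
  have hφ : φ = aeval (fun i => φ (X i)) := by
    apply MvPolynomial.algHom_ext; simp
  set P : Fin 2 → Polynomial (B (RatFunc k)) := fun i => φ (X i) with hP
  set al := algebraMap (Polynomial k) (RatFunc k) with hal
  have hali : Function.Injective (MvPolynomial.map al : B (Polynomial k) →+* B (RatFunc k)) :=
    MvPolynomial.map_injective _ (RatFunc.algebraMap_injective k)
  set L := (P 0).natDegree + (P 1).natDegree with hL
  have hLi : ∀ i l, L < l → (P i).coeff l = 0 := by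
    intro i l hl
    apply Polynomial.coeff_eq_zero_of_natDegree_lt
    fin_cases i <;> simp <;> omega
  obtain ⟨N, hN, hNc⟩ : ∃ N : Polynomial k, N ≠ 0 ∧ ∀ i l, ∃ c : B (Polynomial k),
      MvPolynomial.map al c = C (al N) * (P i).coeff l := by
    let := MvPolynomial.algebraMvPolynomial (σ := Fin 2) (R := Polynomial k) (S := RatFunc k)
    obtain ⟨⟨b, hb⟩, hb'⟩ := IsLocalization.exist_integer_multiples
      ((nonZeroDivisors (Polynomial k)).map (C (σ := Fin 2))) (S := B (RatFunc k))
      ((Finset.univ : Finset (Fin 2)) ×ˢ Finset.range (L + 1)) (fun x => (P x.1).coeff x.2)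
    obtain ⟨N, hN, rfl⟩ := hb
    refine ⟨N, nonZeroDivisors.ne_zero hN, ?_⟩
    intro i l
    by_cases hl : L < l
    · exact ⟨0, by simp [hLi i l hl]⟩
    · obtain ⟨c, hc⟩ := hb' (i, l) (by simp; omega)
      refine ⟨c, ?_⟩
      rw [MvPolynomial.algebraMap_def] at hc
      rw [hc]
      simp only [Algebra.smul_def, MvPolynomial.algebraMap_def]
      rw [MvPolynomial.map_C]
  choose c hc using hNc
  let G : Fin 2 → Polynomial (B (Polynomial k)) := fun i =>
    ∑ l ∈ Finset.range (L + 1), Polynomial.monomial l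
      (if l = 0 then X i else C (N ^ (l - 1)) * c i l)
  have hG0 : ∀ i, (G i).coeff 0 = X i := by
    intro i
    simp only [G, Polynomial.finsetSum_coeff, Polynomial.coeff_monomial]
    rw [Finset.sum_ite_eq']
    simp
  have hGM : ∀ i, Polynomial.map (MvPolynomial.map al) (G i) = scl (C (al N)) (P i) := by
    intro i
    ext1 l
    rw [Polynomial.coeff_map, coeff_scl]
    rcases Nat.eq_zero_or_pos l with rfl | hl
    · rw [hG0, Polynomial.coeff_zero_eq_eval_zero, h0]; simp
    · by_cases hlL : L < l
      · rw [hLi i l hlL]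
        simp only [G, Polynomial.finsetSum_coeff, Polynomial.coeff_monomial]
        rw [Finset.sum_ite_eq']
        simp [Nat.not_le.mpr hlL]
      · simp only [G, Polynomial.finsetSum_coeff, Polynomial.coeff_monomial]
        rw [Finset.sum_ite_eq']
        simp only [Finset.mem_range, if_pos (show l < L + 1 by omega), if_neg hl.ne']
        rw [map_mul, hc, MvPolynomial.map_C, map_pow, map_pow, ← mul_assoc, ← pow_succ,
          Nat.sub_add_cancel hl, mul_comm]
  have hGv : aeval G v = Polynomial.C v := by
    apply Polynomial.map_injective _ hali
    rw [aeval_nat, funext hGM, ← aeval_scl, ← hφ, h2]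
    simp [scl]
  have hex : ∀ i l, (G i).coeff l ≠ 0 → ∃ (e : ℕ) (d : B (Polynomial k)),
      (G i).coeff l = C (p ^ e) * d ∧ MvPolynomial.map π d ≠ 0 :=
    fun i l hq => exists_mult p hp π hπ _ hq
  choose! e1 d1 hed hd1 using hex
  classical
  let T : Finset (Fin 2 × ℕ) := ((Finset.univ : Finset (Fin 2)) ×ˢ Finset.Icc 1 L).filter
    (fun x => (G x.1).coeff x.2 ≠ 0)
  have hTmem : ∀ i l, 0 < l → (G i).coeff l ≠ 0 → (i, l) ∈ T := by
    intro i l hl hne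
    simp only [T, Finset.mem_filter, Finset.mem_product, Finset.mem_univ, true_and,
      Finset.mem_Icc]
    refine ⟨⟨hl, ?_⟩, hne⟩
    by_contra hlL
    apply hne
    apply hali
    have := congrArg (fun q => Polynomial.coeff q l) (hGM i)
    simp only [Polynomial.coeff_map, coeff_scl] at this
    rw [this, hLi i l (by omega)]; simp
  have hT : T.Nonempty := by
    by_contra hT
    rw [Finset.not_nonempty_iff_eq_empty] at hT
    apply hj0
    change P j0 = _
    apply eq_C_of (h0 _)
    rw [← Nat.le_zero, Polynomial.natDegree_le_iff_coeff_eq_zero]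
    intro l hl
    have h3 : (G j0).coeff l = 0 := by
      by_contra hne
      have := hTmem j0 l hl hne
      rw [hT] at this
      simp at this
    have := congrArg (fun q => Polynomial.coeff q l) (hGM j0)
    simp only [Polynomial.coeff_map, coeff_scl, h3, map_zero] at this
    have h4 := (mul_eq_zero.mp this.symm).resolve_right
      (pow_ne_zero _ (by
        rw [Ne, MvPolynomial.C_eq_zero]
        exact (map_ne_zero_iff _ (RatFunc.algebraMap_injective k)).mpr hN))
    exact h4
  obtain ⟨⟨i0, l0⟩, hmem, hmin⟩ := T.exists_min_image
    (fun x => (e1 x.1 x.2 : ℚ) / (x.2 : ℚ)) hT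
  simp only [T, Finset.mem_filter, Finset.mem_product, Finset.mem_univ, true_and,
      Finset.mem_Icc] at hmem
  obtain ⟨⟨hl0, -⟩, hne0⟩ := hmem
  refine degen1 π p hp.ne_zero ((hπ p).mpr dvd_rfl) v G hGv
    (fun i l => if l = 0 then X i else if (G i).coeff l = 0 then 0 else d1 i l)
    (fun i l => if l = 0 then 0 else if (G i).coeff l = 0 then e1 i0 l0 * l else e1 i l)
    l0 (e1 i0 l0) i0 hl0 ?_ ?_ ?_ ?_ ?_ ?_
  · intro i l
    by_cases hl : l = 0
    · subst hl; simp [hG0]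
    · by_cases hz : (G i).coeff l = 0
      · simp [hl, hz]
      · simp only [hl, hz, if_false]
        exact hed i l hz
  · intro i l
    by_cases hl : l = 0
    · subst hl; simp
    · by_cases hz : (G i).coeff l = 0
      · simp only [hl, hz, if_false, if_true]
        exact Nat.le_mul_of_pos_left _ hl0
      · simp only [hl, hz, if_false]
        have := hmin (i, l) (hTmem i l (Nat.pos_of_ne_zero hl) hz)
        simp only at this
        have hl' : (0 : ℚ) < l := by exact_mod_cast Nat.pos_of_ne_zero hl
        have hl0' : (0 : ℚ) < l0 := by exact_mod_cast hl0
        rw [div_le_div_iff₀ hl0' hl'] at this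
        rw [mul_comm l0]
        exact_mod_cast this
  · intro i; simp
  · intro i; simp
  · simp [hne0, (show l0 ≠ 0 by omega)]
  · simp only [hne0, (show l0 ≠ 0 by omega), if_false]
    exact hd1 i0 l0 hne0


lemma weight_two (w : Fin 2 → ℕ) (s : Fin 2 →₀ ℕ) :
    Finsupp.weight w s = s 0 * w 0 + s 1 * w 1 := by
  rw [Finsupp.weight_apply, Finsupp.sum_fintype _ _ (by simp)]
  simp [Fin.sum_univ_two]

lemma aeval_two {R S : Type*} [CommRing R] [CommRing S] [Algebra R S] (P : Fin 2 → S)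
    (s : Fin 2 →₀ ℕ) (c : R) :
    aeval P (monomial s c) = algebraMap R S c * (P 0 ^ s 0 * P 1 ^ s 1) := by
  rw [aeval_monomial, Finsupp.prod_fintype _ _ (by simp), Fin.prod_univ_two]

lemma Inv.top {κ : Type*} [Field κ] {f : B κ} (h : Inv κ f) (w : Fin 2 → ℕ) (d : ℕ)
    (hd : ∀ s ∈ f.support, Finsupp.weight w s ≤ d) :
    Inv κ (weightedHomogeneousComponent w d f) := by
  let z : RatFunc κ := RatFunc.X
  have hz : z ≠ 0 := RatFunc.X_ne_zero
  let θ : B (RatFunc κ) ≃ₐ[RatFunc κ] B (RatFunc κ) := AlgEquiv.ofAlgHom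
    (aeval fun i => C (z ^ w i)⁻¹ * X i) (aeval fun i => C (z ^ w i) * X i)
    (by
      apply MvPolynomial.algHom_ext
      intro i
      simp only [AlgHom.comp_apply, aeval_X, map_mul, AlgHom.id_apply, algHom_C, algebraMap_eq]
      rw [← mul_assoc, ← map_mul, mul_inv_cancel₀ (pow_ne_zero _ hz)]; simp)
    (by
      apply MvPolynomial.algHom_ext
      intro i
      simp only [AlgHom.comp_apply, aeval_X, map_mul, AlgHom.id_apply, algHom_C, algebraMap_eq]
      rw [← mul_assoc, ← map_mul, inv_mul_cancel₀ (pow_ne_zero _ hz)]; simp)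
  have hθ : ∀ s c, θ (monomial s c) = monomial s (c * (z ^ Finsupp.weight w s)⁻¹) := by
    intro s c
    change aeval (fun i => C (z ^ w i)⁻¹ * X i) (monomial s c) = _
    rw [aeval_two, weight_two]
    have : (monomial s (c * (z ^ (s 0 * w 0 + s 1 * w 1))⁻¹) : B (RatFunc κ)) =
        C (c * (z ^ (s 0 * w 0 + s 1 * w 1))⁻¹) * (X 0 ^ s 0 * X 1 ^ s 1) := by
      rw [MvPolynomial.monomial_eq, Finsupp.prod_fintype _ _ (by simp), Fin.prod_univ_two]
    rw [this, algebraMap_eq, mul_pow, mul_pow, pow_add, mul_inv, map_mul, map_mul,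
      mul_comm (s 0), mul_comm (s 1), pow_mul, pow_mul, ← inv_pow, ← inv_pow]
    simp only [map_pow, ← inv_pow]
    ring
  let V : B (Polynomial κ) := ∑ s ∈ f.support, monomial s
    (Polynomial.C (coeff s f) * Polynomial.X ^ (d - Finsupp.weight w s))
  have hV : MvPolynomial.map (algebraMap (Polynomial κ) (RatFunc κ)) V =
      C (z ^ d) * θ (MvPolynomial.map (algebraMap κ (RatFunc κ)) f) := by
    conv_rhs => rw [f.as_sum]
    simp only [V, map_sum, Finset.mul_sum, MvPolynomial.map_monomial, hθ, C_mul_monomial]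
    apply Finset.sum_congr rfl
    intro s hs
    congr 1
    rw [map_mul, map_pow, RatFunc.algebraMap_X]
    have h1 : z ^ d = z ^ (d - Finsupp.weight w s) * z ^ (Finsupp.weight w s) := by
      rw [← pow_add, Nat.sub_add_cancel (hd s hs)]
    have h2 : algebraMap (Polynomial κ) (RatFunc κ) (Polynomial.C (coeff s f)) =
      algebraMap κ (RatFunc κ) (coeff s f) := by
      simp
    rw [h1, h2]
    field_simp
    rfl
  have hI := ((h.baseChange (algebraMap κ (RatFunc κ))).conj θ).smul (z ^ d)
  rw [← hV] at hI
  have := degen (Polynomial.X : Polynomial κ) Polynomial.irreducible_X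
    (Polynomial.evalRingHom 0) (by
      intro a
      rw [Polynomial.X_dvd_iff, Polynomial.coeff_zero_eq_eval_zero]; rfl) V hI
  convert this using 1
  ext s
  classical
  rw [coeff_weightedHomogeneousComponent, coeff_map]
  simp only [V, coeff_sum, coeff_monomial]
  rw [Finset.sum_ite_eq']
  by_cases hs : s ∈ f.support
  · simp only [hs, if_true]
    by_cases hw : Finsupp.weight w s = d
    · simp [hw]
    · have := hd s hs
      have h3 : d - Finsupp.weight w s ≠ 0 := by omega
      simp [hw, h3]
  · have : coeff s f = 0 := by simpa using hs
    simp [this]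

lemma factor {K : Type*} [Field K] (φ : B K →ₐ[K] Polynomial (B K))
    (h0 : ∀ g, (φ g).eval 0 = g) (f g : B K) (hf : f ≠ 0) (hfi : φ f = Polynomial.C f)
    (hg : g ∣ f) : φ g = Polynomial.C g := by
  obtain ⟨h, rfl⟩ := hg
  have hne : ∀ g, g ≠ 0 → φ g ≠ 0 := by
    intro g hg h
    apply hg
    rw [← h0 g, h]; simp
  apply eq_C_of (h0 g)
  have := congrArg Polynomial.natDegree hfi
  rw [map_mul, Polynomial.natDegree_mul (hne _ (left_ne_zero_of_mul hf))
    (hne _ (right_ne_zero_of_mul hf)), Polynomial.natDegree_C] at this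
  omega

lemma unique_max {K : Type*} [Field K] (φ : B K →ₐ[K] Polynomial (B K))
    (h0 : ∀ g, (φ g).eval 0 = g) (h : B K) (hi : φ h = Polynomial.C h)
    (s : Fin 2 →₀ ℕ) (hs : s ∈ h.support)
    (hmax : ∀ t ∈ h.support, t ≠ s →
      t 0 * (φ (X 0)).natDegree + t 1 * (φ (X 1)).natDegree <
      s 0 * (φ (X 0)).natDegree + s 1 * (φ (X 1)).natDegree) :
    s 0 * (φ (X 0)).natDegree + s 1 * (φ (X 1)).natDegree = 0 := by
  have hne : ∀ g, g ≠ 0 → φ g ≠ 0 := by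
    intro g hg h
    apply hg
    rw [← h0 g, h]; simp
  have hφ : φ = aeval (fun i => φ (X i)) := by
    apply MvPolynomial.algHom_ext; simp
  have hdeg : ∀ t ∈ h.support, (φ (monomial t (coeff t h))).natDegree =
      t 0 * (φ (X 0)).natDegree + t 1 * (φ (X 1)).natDegree := by
    intro t ht
    have hc : coeff t h ≠ 0 := by simpa using ht
    rw [hφ, aeval_two, ← hφ, Polynomial.algebraMap_apply]
    rw [Polynomial.natDegree_C_mul (by simpa using hc), Polynomial.natDegree_mul, Polynomial.natDegree_pow,
      Polynomial.natDegree_pow]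
    · exact pow_ne_zero _ (hne _ (X_ne_zero _))
    · exact pow_ne_zero _ (hne _ (X_ne_zero _))
  by_contra hpos
  set D := s 0 * (φ (X 0)).natDegree + s 1 * (φ (X 1)).natDegree with hD
  have h1 : (φ h).coeff D = (φ (monomial s (coeff s h))).coeff D := by
    conv_lhs => rw [h.as_sum, map_sum, Polynomial.finsetSum_coeff]
    apply Finset.sum_eq_single s
    · intro t ht hts
      apply Polynomial.coeff_eq_zero_of_natDegree_lt
      rw [hdeg t ht]
      exact hmax t ht hts
    · intro hns; exact absurd hs hns
  rw [hi, Polynomial.coeff_C_of_ne_zero hpos, hD, ← hdeg s hs] at h1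
  have h2 := Polynomial.leadingCoeff_eq_zero.mp h1.symm
  refine hne _ ?_ h2
  rw [Ne, monomial_eq_zero]
  simpa using hs

lemma coeff_hom {κ R : Type*} [CommRing κ] [CommRing R] [Algebra κ R] (G : Polynomial κ) (N δ : ℕ)
    (U W : Polynomial R) (hU : U.natDegree ≤ δ) (hW : W.natDegree ≤ δ) :
    (aeval ![U, W] (G.homogenize N)).coeff (N * δ) =
      aeval ![U.coeff δ, W.coeff δ] (G.homogenize N) := by
  have hh := Polynomial.isHomogeneous_homogenize (n := N) G
  conv_lhs => rw [(G.homogenize N).as_sum]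
  conv_rhs => rw [(G.homogenize N).as_sum]
  rw [map_sum, map_sum, Polynomial.finsetSum_coeff]
  apply Finset.sum_congr rfl
  intro s hs
  have hN : s 0 + s 1 = N := by
    have := hh (d := s) (by simpa using hs)
    rw [weight_two] at this
    simpa using this
  rw [aeval_two, aeval_two, Polynomial.algebraMap_apply, Polynomial.coeff_C_mul]
  congr 1
  rw [← hN, add_mul]
  simp only [Matrix.cons_val_zero, Matrix.cons_val_one]
  rw [Polynomial.coeff_mul_add_eq_of_natDegree_le (Polynomial.natDegree_pow_le_of_le _ hU)
     (Polynomial.natDegree_pow_le_of_le _ hW), Polynomial.coeff_pow_of_natDegree_le hU,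
     Polynomial.coeff_pow_of_natDegree_le hW]


lemma exists_deriv {K : Type*} [Field K] (i : Fin 2) :
    ∃ E : Derivation ℤ (Polynomial (B K)) (Polynomial (B K)),
      ∀ q l, (E q).coeff l = pderiv i (q.coeff l) := by
  let _ : Differential (B K) := ⟨(pderiv i).restrictScalars ℤ⟩
  exact ⟨Differential.mapCoeffs, fun q l => Differential.coeff_mapCoeffs q l⟩

lemma coprime_bound {R : Type*} [CommRing R] [IsDomain R] (P Q U W : Polynomial R) (c : R)
    (hc : c ≠ 0) (b a : ℕ) (hb : 0 < b) (ha : 0 < a) (r : Polynomial R)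
    (h : P ^ b + r * Q ^ a = Polynomial.C c) (hU : U ≠ 0)
    (n m : ℕ) (hd : P ^ n * U = Q ^ m * W) :
    m * Q.natDegree ≤ U.natDegree := by
  let L := FractionRing R
  have hinj : Function.Injective (algebraMap R L) := IsFractionRing.injective R L
  let j := Polynomial.mapRingHom (algebraMap R L)
  have hcop : IsCoprime (j P) (j Q) := by
    have hc' : algebraMap R L c ≠ 0 := (map_ne_zero_iff _ hinj).mpr hc
    refine ⟨Polynomial.C (algebraMap R L c)⁻¹ * (j P) ^ (b - 1),
      Polynomial.C (algebraMap R L c)⁻¹ * (j r * (j Q) ^ (a - 1)), ?_⟩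
    have h1 := congrArg j h
    simp only [map_add, map_mul, map_pow] at h1
    have h2 : j (Polynomial.C c) = Polynomial.C (algebraMap R L c) := by simp [j]
    rw [h2] at h1
    calc _ = Polynomial.C (algebraMap R L c)⁻¹ * ((j P) ^ (b - 1 + 1) + j r * (j Q) ^ (a - 1 + 1)) := by ring
      _ = 1 := by
        rw [Nat.sub_add_cancel hb, Nat.sub_add_cancel ha, h1, ← Polynomial.C_mul,
          inv_mul_cancel₀ hc', Polynomial.C_1]
  have hdv : (j Q) ^ m ∣ j U := by
    have h1 : (j Q) ^ m ∣ (j P) ^ n * j U := ⟨j W, by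
      rw [← map_pow, ← map_pow, ← map_mul, hd, map_mul]⟩
    exact (hcop.symm.pow).dvd_of_dvd_mul_left h1
  have hjU : j U ≠ 0 := by
    intro h
    exact hU (Polynomial.map_injective _ hinj (by simpa [j] using h))
  have := Polynomial.natDegree_le_of_dvd hdv hjU
  rw [Polynomial.natDegree_pow] at this
  simpa [j, Polynomial.natDegree_map_eq_of_injective hinj] using this

lemma deriv_step {K : Type*} [Field K] (P Q : Polynomial (B K)) (a b : ℕ) (ha : 0 < a)
    (hb : 0 < b) (hab : Nat.Coprime a b) (lam : K) (hlam : lam ≠ 0)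
    (hP : P.eval 0 = X 0) (hQ : Q.eval 0 = X 1) (hα : 0 < P.natDegree) (hβ : 0 < Q.natDegree)
    (h : P ^ b - Polynomial.C (C lam) * Q ^ a = Polynomial.C (X 0 ^ b - C lam * X 1 ^ a)) :
    a = 1 ∨ b = 1 := by
  have hP0 : P.coeff 0 = X 0 := by rw [Polynomial.coeff_zero_eq_eval_zero, hP]
  have hQ0 : Q.coeff 0 = X 1 := by rw [Polynomial.coeff_zero_eq_eval_zero, hQ]
  have hC : ∀ c : K, c ≠ 0 → (C c : B K) ≠ 0 := fun c hc => by rwa [Ne, C_eq_zero]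
  have hCC : ∀ c : K, c ≠ 0 → (Polynomial.C (C c) : Polynomial (B K)) ≠ 0 :=
    fun c hc => by rwa [Ne, Polynomial.C_eq_zero, C_eq_zero]
  have hlC : (Polynomial.C (C lam) : Polynomial (B K)) ≠ 0 := hCC _ hlam
  have key : ∀ i : Fin 2, ∃ P' Q' : Polynomial (B K),
      P'.coeff 0 = pderiv i (X 0) ∧ Q'.coeff 0 = pderiv i (X 1) ∧
      P'.natDegree ≤ P.natDegree ∧ Q'.natDegree ≤ Q.natDegree ∧
      (b : Polynomial (B K)) * P ^ (b - 1) * P' -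
        Polynomial.C (C lam) * ((a : Polynomial (B K)) * Q ^ (a - 1) * Q') =
      Polynomial.C ((b : B K) * X 0 ^ (b - 1) * pderiv i (X 0) -
        C lam * ((a : B K) * X 1 ^ (a - 1) * pderiv i (X 1))) := by
    intro i
    obtain ⟨E, hE⟩ := exists_deriv (K := K) i
    have hEC : ∀ g, E (Polynomial.C g) = Polynomial.C (pderiv i g) := by
      intro g
      ext1 l
      rw [hE, Polynomial.coeff_C, Polynomial.coeff_C]
      split_ifs <;> simp
    have hEd : ∀ q, (E q).natDegree ≤ q.natDegree := by
      intro q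
      rw [Polynomial.natDegree_le_iff_coeff_eq_zero]
      intro l hl
      rw [hE, Polynomial.coeff_eq_zero_of_natDegree_lt hl, map_zero]
    refine ⟨E P, E Q, by rw [hE, hP0], by rw [hE, hQ0], hEd P, hEd Q, ?_⟩
    have := congrArg E h
    rw [map_sub, Derivation.leibniz, Derivation.leibniz_pow, Derivation.leibniz_pow, hEC, hEC] at this
    rw [map_sub (pderiv (R := K) i), pderiv_C_mul, Derivation.leibniz_pow, Derivation.leibniz_pow, pderiv_C] at this
    simp only [smul_eq_mul, nsmul_eq_mul, map_zero, mul_zero, add_zero] at this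
    simpa only [mul_assoc] using this
  have hcast : ∀ n : ℕ, (n : Polynomial (B K)) = Polynomial.C (C (n : K)) := by
    intro n; simp
  have hcast' : ∀ n : ℕ, (n : B K) = (C (n : K)) := by
    intro n; simp
  simp only [hcast, hcast'] at key
  have hPne : P ≠ 0 := by intro h; simp [h] at hα
  have hQne : Q ≠ 0 := by intro h; simp [h] at hβ
  by_cases hb0 : (b : K) = 0
  · left
    have ha0 : (a : K) ≠ 0 := by
      intro ha0
      have h1 := (CharP.cast_eq_zero_iff K (ringChar K) a).mp ha0
      have h2 := (CharP.cast_eq_zero_iff K (ringChar K) b).mp hb0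
      have h3 := Nat.dvd_gcd h1 h2
      rw [hab, Nat.dvd_one] at h3
      have := (CharP.cast_eq_zero_iff K (ringChar K) 1).mpr (by rw [h3])
      simp at this
    obtain ⟨P', Q', -, hQ', -, -, h1⟩ := key 1
    simp only [hb0, map_zero, zero_mul, zero_sub, pderiv_X_self, mul_one] at h1
    have hQ'0 : Q' ≠ 0 := by
      intro h; rw [h] at hQ'; simp at hQ'
    have h2 := congrArg Polynomial.natDegree h1
    rw [Polynomial.natDegree_C, Polynomial.natDegree_neg, Polynomial.natDegree_C_mul (hC _ hlam),
      mul_assoc, Polynomial.natDegree_C_mul (hC _ ha0), Polynomial.natDegree_mul (pow_ne_zero _ hQne) hQ'0,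
      Polynomial.natDegree_pow] at h2
    have h3 : (a - 1) * Q.natDegree = 0 := by omega
    rcases Nat.mul_eq_zero.mp h3 with h4 | h4 <;> omega
  by_cases ha0 : (a : K) = 0
  · right
    obtain ⟨P', Q', hP', -, -, -, h1⟩ := key 0
    simp only [ha0, map_zero, zero_mul, mul_zero, sub_zero, pderiv_X_self, mul_one] at h1
    have hP'0 : P' ≠ 0 := by
      intro h; rw [h] at hP'; simp at hP'
    have h2 := congrArg Polynomial.natDegree h1
    rw [Polynomial.natDegree_C,
      mul_assoc, Polynomial.natDegree_C_mul (hC _ hb0), Polynomial.natDegree_mul (pow_ne_zero _ hPne) hP'0,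
      Polynomial.natDegree_pow] at h2
    have h3 : (b - 1) * P.natDegree = 0 := by omega
    rcases Nat.mul_eq_zero.mp h3 with h4 | h4 <;> omega
  by_contra hcon
  push Not at hcon
  obtain ⟨P0, Q0, hP00, hQ00, hdP0, hdQ0, e0⟩ := key 0
  obtain ⟨P1, Q1, hP10, hQ10, hdP1, hdQ1, e1⟩ := key 1
  have p10 : pderiv (1 : Fin 2) (X 0 : B K) = 0 := pderiv_X_of_ne (by decide)
  have p01 : pderiv (0 : Fin 2) (X 1 : B K) = 0 := pderiv_X_of_ne (by decide)
  rw [pderiv_X_self] at hP00 hQ10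
  rw [p10] at hP10
  rw [p01] at hQ00
  simp only [pderiv_X_self, p01, p10, mul_zero, mul_one, sub_zero, zero_sub] at e0 e1
  set u : B K := C lam * (C (a : K) * X 1 ^ (a - 1)) with hu
  set w : B K := C (b : K) * X 0 ^ (b - 1) with hw
  have hu0 : u ≠ 0 := by
    simp only [hu]
    refine mul_ne_zero (hC _ hlam) (mul_ne_zero (hC _ ha0) (pow_ne_zero _ (X_ne_zero _)))
  have hw0 : w ≠ 0 := by
    simp only [hw]
    exact (mul_ne_zero (hC _ hb0) (pow_ne_zero _ (X_ne_zero _)))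
  set DP := Polynomial.C u * P0 + Polynomial.C w * P1 with hDP
  set DQ := Polynomial.C u * Q0 + Polynomial.C w * Q1 with hDQ
  have hDP0 : DP ≠ 0 := by
    intro h
    have := congrArg (fun q => Polynomial.coeff q 0) h
    simp only [hDP, Polynomial.coeff_add, Polynomial.coeff_C_mul, hP00, hP10, mul_one, mul_zero, add_zero,
      Polynomial.coeff_zero] at this
    exact hu0 this
  have hDQ0 : DQ ≠ 0 := by
    intro h
    have := congrArg (fun q => Polynomial.coeff q 0) h
    simp only [hDQ, Polynomial.coeff_add, Polynomial.coeff_C_mul, hQ00, hQ10, mul_one, mul_zero, zero_add,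
      Polynomial.coeff_zero] at this
    exact hw0 this
  have hdDP : DP.natDegree ≤ P.natDegree := by
    refine (Polynomial.natDegree_add_le _ _).trans (max_le ?_ ?_)
    · exact (Polynomial.natDegree_C_mul_le _ _).trans hdP0
    · exact (Polynomial.natDegree_C_mul_le _ _).trans hdP1
  have hdDQ : DQ.natDegree ≤ Q.natDegree := by
    refine (Polynomial.natDegree_add_le _ _).trans (max_le ?_ ?_)
    · exact (Polynomial.natDegree_C_mul_le _ _).trans hdQ0
    · exact (Polynomial.natDegree_C_mul_le _ _).trans hdQ1
  have hrel : P ^ (b - 1) * (Polynomial.C (C (b : K)) * DP) =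
      Q ^ (a - 1) * (Polynomial.C (C lam) * Polynomial.C (C (a : K)) * DQ) := by
    have hneg : Polynomial.C (-u) = -Polynomial.C u := by simp
    rw [hneg] at e1
    simp only [hDP, hDQ]
    linear_combination Polynomial.C u * e0 + Polynomial.C w * e1
  have hcne : (X 0 ^ b - C lam * X 1 ^ a : B K) ≠ 0 := by
    intro h
    have := congrArg (aeval ![(1 : K), 0]) h
    simp [ha.ne'] at this
  have b1 := coprime_bound P Q (Polynomial.C (C (b : K)) * DP) _ _ hcne b a hb ha
    (-Polynomial.C (C lam)) (by rw [← h]; ring) (mul_ne_zero (hCC _ hb0) hDP0) _ _ hrel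
  have hrel2 : Q ^ (a - 1) * (Polynomial.C (C lam) * (Polynomial.C (C (a : K)) * DQ)) =
      P ^ (b - 1) * (Polynomial.C (C (b : K)) * DP) := by rw [hrel]; ring
  have b2 := coprime_bound Q P (Polynomial.C (C lam) * (Polynomial.C (C (a : K)) * DQ)) _
    (- C lam⁻¹ * (X 0 ^ b - C lam * X 1 ^ a)) (mul_ne_zero (neg_ne_zero.mpr (hC _ (inv_ne_zero hlam))) hcne) a b ha hb
    (-Polynomial.C (C lam⁻¹)) (by
      rw [Polynomial.C_mul, ← h]
      have : (Polynomial.C (C lam⁻¹) : Polynomial (B K)) * Polynomial.C (C lam) = 1 := by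
        rw [← Polynomial.C_mul, ← C_mul, inv_mul_cancel₀ hlam]; simp
      rw [Polynomial.C_neg]
      linear_combination (- Q ^ a) * this)
    (mul_ne_zero hlC (mul_ne_zero (hCC _ ha0) hDQ0)) _ _ hrel2
  rw [Polynomial.natDegree_C_mul (hC _ hb0)] at b1
  rw [Polynomial.natDegree_C_mul (hC _ hlam), Polynomial.natDegree_C_mul (hC _ ha0)] at b2
  obtain ⟨a', rfl⟩ : ∃ a', a = a' + 2 := ⟨a - 2, by omega⟩
  obtain ⟨b', rfl⟩ : ∃ b', b = b' + 2 := ⟨b - 2, by omega⟩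
  have c1 : (a' + 1) * Q.natDegree ≤ P.natDegree := b1.trans hdDP
  have c2 : (b' + 1) * P.natDegree ≤ Q.natDegree := b2.trans hdDQ
  have ha' : a' = 0 := by nlinarith
  have hb' : b' = 0 := by nlinarith
  subst ha' hb'
  simp at hab


lemma dir_zero {K : Type*} [Field K] (φ : B K →ₐ[K] Polynomial (B K))
    (h0 : ∀ g, (φ g).eval 0 = g) (h : B K) (hi : φ h = Polynomial.C h) (a b d : ℕ) (hb : 0 < b)
    (hd : ∀ s ∈ h.support, s 0 * a + s 1 * b = d)
    (hlt : a * (φ (X 1)).natDegree < b * (φ (X 0)).natDegree) :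
    ∀ s ∈ h.support, s 0 = 0 := by
  intro s hs
  by_contra hs0
  obtain ⟨t, ht, htm⟩ := Finset.exists_max_image h.support (fun s => s 0) ⟨s, hs⟩
  have key := unique_max φ h0 h hi t ht (by
    intro u hu hut
    have h1 := htm u hu
    have h2 := hd u hu
    have h3 := hd t ht
    have h4 : u 0 < t 0 := by
      refine lt_of_le_of_ne h1 fun h5 => hut ?_
      ext i
      fin_cases i
      · exact h5
      · rw [h5] at h2
        have : u 1 * b = t 1 * b := by omega
        exact Nat.eq_of_mul_eq_mul_right hb this
    generalize (φ (X 0)).natDegree = α at *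
    generalize (φ (X 1)).natDegree = β at *
    apply Nat.lt_of_mul_lt_mul_left (a := b)
    obtain ⟨e, he⟩ := Nat.exists_eq_add_of_lt h4
    zify at *
    have h5 : (b * (t 0 * α + t 1 * β) - b * (u 0 * α + u 1 * β) : ℤ) = (e + 1) * (b * α - a * β) := by
      have : (t 0 : ℤ) - u 0 = e + 1 := by linarith
      rw [← this]
      linear_combination β * h3 - β * h2
    nlinarith)
  have h1 := htm s hs
  have h2 : t 0 * (φ (X 0)).natDegree = 0 := by omega
  rcases Nat.mul_eq_zero.mp h2 with h3 | h3
  · omega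
  · rw [h3] at hlt; omega

lemma dir_one {K : Type*} [Field K] (φ : B K →ₐ[K] Polynomial (B K))
    (h0 : ∀ g, (φ g).eval 0 = g) (h : B K) (hi : φ h = Polynomial.C h) (a b d : ℕ) (ha : 0 < a)
    (hd : ∀ s ∈ h.support, s 0 * a + s 1 * b = d)
    (hlt : b * (φ (X 0)).natDegree < a * (φ (X 1)).natDegree) :
    ∀ s ∈ h.support, s 1 = 0 := by
  intro s hs
  by_contra hs0
  obtain ⟨t, ht, htm⟩ := Finset.exists_max_image h.support (fun s => s 1) ⟨s, hs⟩
  have key := unique_max φ h0 h hi t ht (by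
    intro u hu hut
    have h1 := htm u hu
    have h2 := hd u hu
    have h3 := hd t ht
    have h4 : u 1 < t 1 := by
      refine lt_of_le_of_ne h1 fun h5 => hut ?_
      ext i
      fin_cases i
      · rw [h5] at h2
        have : u 0 * a = t 0 * a := by omega
        exact Nat.eq_of_mul_eq_mul_right ha this
      · exact h5
    generalize (φ (X 0)).natDegree = α at *
    generalize (φ (X 1)).natDegree = β at *
    apply Nat.lt_of_mul_lt_mul_left (a := a)
    obtain ⟨e, he⟩ := Nat.exists_eq_add_of_lt h4
    zify at *
    have h5 : (a * (t 0 * α + t 1 * β) - a * (u 0 * α + u 1 * β) : ℤ) = (e + 1) * (a * β - b * α) := by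
      have : (t 1 : ℤ) - u 1 = e + 1 := by linarith
      rw [← this]
      linear_combination α * h3 - α * h2
    nlinarith)
  have h1 := htm s hs
  have h2 : t 1 * (φ (X 1)).natDegree = 0 := by omega
  rcases Nat.mul_eq_zero.mp h2 with h3 | h3
  · omega
  · rw [h3] at hlt; omega

lemma aeval_homogenize_mul {K R : Type*} [CommRing K] [CommRing R] [Algebra K R] (z W : R)
    (p : Polynomial K) (n : ℕ) (hn : p.natDegree ≤ n) :
    aeval ![z * W, W] (p.homogenize n) = W ^ n * Polynomial.aeval z p := by
  apply Polynomial.induction_with_natDegree_le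
    (fun p ↦ aeval ![z * W, W] (p.homogenize n) = W ^ n * Polynomial.aeval z p) (N := n)
  · simp
  · intro m r hr hm
    obtain ⟨e, rfl⟩ := Nat.exists_eq_add_of_le hm
    rw [Polynomial.homogenize_C_mul, Polynomial.homogenize_X_pow hm]
    simp
    ring
  · intro f g _ _ hf hg
    rw [Polynomial.homogenize_add, map_add, hf, hg, map_add, mul_add]
  · exact hn

lemma exists_not_dvd {K : Type*} [Field K] (h : B K) (i : Fin 2) (hi : ¬ X i ∣ h) :
    ∃ s ∈ h.support, s i = 0 := by
  by_contra hcon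
  push Not at hcon
  apply hi
  rw [h.as_sum]
  apply Finset.dvd_sum
  intro s hs
  rw [X_dvd_monomial]
  exact Or.inr (hcon s hs)

lemma ratio_const {K : Type*} [Field K] (u w : B K) (hu : u ≠ 0) (hw : w ≠ 0) (H : Polynomial K)
    (hH : H ≠ 0) (g : ℕ) (hg : H.natDegree ≤ g) (h : aeval ![u, w] (H.homogenize g) = 0) :
    ∃ lam : K, lam ≠ 0 ∧ u = C lam * w := by
  let L := FractionRing (B K)
  have hinj : Function.Injective (algebraMap (B K) L) := IsFractionRing.injective _ _
  have hu' : algebraMap (B K) L u ≠ 0 := (map_ne_zero_iff _ hinj).mpr hu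
  have hw' : algebraMap (B K) L w ≠ 0 := (map_ne_zero_iff _ hinj).mpr hw
  set z : L := algebraMap (B K) L u / algebraMap (B K) L w with hz
  have hz0 : z ≠ 0 := div_ne_zero hu' hw'
  have hzw : z * algebraMap (B K) L w = algebraMap (B K) L u := div_mul_cancel₀ _ hw'
  have h1 : aeval ![z * algebraMap (B K) L w, algebraMap (B K) L w] (H.homogenize g) = 0 := by
    have h2 := congrArg (algebraMap (B K) L) h
    rw [map_zero, ← IsScalarTower.coe_toAlgHom' K (B K) L, ← AlgHom.comp_apply] at h2
    rw [← h2]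
    congr 1
    apply MvPolynomial.algHom_ext
    intro i
    fin_cases i <;> simp [hzw]
  rw [aeval_homogenize_mul _ _ _ _ hg] at h1
  have h2 : Polynomial.aeval z H = 0 := (mul_eq_zero.mp h1).resolve_left (pow_ne_zero _ hw')
  have hzi : IsIntegral K z := isAlgebraic_iff_isIntegral.mp ⟨H, hH, h2⟩
  have hzi' : IsIntegral K z⁻¹ := hzi.inv
  obtain ⟨x, hx⟩ := IsIntegrallyClosed.isIntegral_iff.mp (hzi.tower_top (A := B K))
  obtain ⟨y, hy⟩ := IsIntegrallyClosed.isIntegral_iff.mp (hzi'.tower_top (A := B K))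
  have hxy : x * y = 1 := hinj (by rw [map_mul, hx, hy, mul_inv_cancel₀ hz0, map_one])
  have hxu : IsUnit x := IsUnit.of_mul_eq_one _ hxy
  rw [MvPolynomial.isUnit_iff_eq_C_of_isReduced] at hxu
  obtain ⟨lam, hl, rfl⟩ := hxu
  refine ⟨lam, hl.ne_zero, hinj ?_⟩
  rw [map_mul, hx, hzw]


lemma exists_H {K : Type*} [Field K] (h : B K) (a b g : ℕ) (ha : 0 < a) (hb : 0 < b)
    (hab : Nat.Coprime a b)
    (hd : ∀ s ∈ h.support, s 0 * a + s 1 * b = a * b * g) :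
    ∃ H : Polynomial K, H.natDegree ≤ g ∧
      h = aeval ![(X 0 : B K) ^ b, X 1 ^ a] (H.homogenize g) := by
  have key : ∀ s ∈ h.support, ∃ i ≤ g, s 0 = b * i ∧ s 1 = a * (g - i) := by
    intro s hs
    have h1 := hd s hs
    have h2 : b ∣ s 0 := by
      have h3 : b ∣ s 0 * a + s 1 * b := h1 ▸ ⟨a * g, by ring⟩
      have h4 : b ∣ s 0 * a := (Nat.dvd_add_left (dvd_mul_left b (s 1))).mp h3
      exact hab.symm.dvd_of_dvd_mul_right h4
    obtain ⟨i, hi⟩ := h2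
    have h3 : a * i + s 1 = a * g := by
      apply Nat.eq_of_mul_eq_mul_left hb
      rw [hi] at h1
      linarith
    have h4 : i ≤ g := by
      exact Nat.le_of_mul_le_mul_left (a := i) (b := g) (by omega) ha
    refine ⟨i, h4, hi, ?_⟩
    rw [Nat.mul_sub]
    omega
  choose! I hI1 hI2 hI3 using key
  refine ⟨∑ s ∈ h.support, Polynomial.monomial (I s) (coeff s h), ?_, ?_⟩
  · apply Polynomial.natDegree_sum_le_of_forall_le
    intro s hs
    exact (Polynomial.natDegree_monomial_le _).trans (hI1 s hs)
  · rw [Polynomial.homogenize_finsetSum, map_sum]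
    conv_lhs => rw [h.as_sum]
    apply Finset.sum_congr rfl
    intro s hs
    rw [Polynomial.homogenize_monomial (hI1 s hs), aeval_two]
    have : (monomial s (coeff s h) : B K) = aeval X (monomial s (coeff s h)) := by simp
    rw [this, aeval_two, hI2 s hs, hI3 s hs]
    simp [pow_mul]

lemma pow_homogenize {K : Type*} [Field K] (lam : K) (r : ℕ) :
    ((Polynomial.X - Polynomial.C lam) ^ r).homogenize r = (X 0 - C lam * X 1 : B K) ^ r := by
  induction r with
  | zero => simp
  | succ r ih =>
    have hd : ((Polynomial.X - Polynomial.C lam) ^ r).natDegree ≤ r := by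
      rw [Polynomial.natDegree_pow, Polynomial.natDegree_X_sub_C, mul_one]
    have h1 := Polynomial.homogenize_mul ((Polynomial.X - Polynomial.C lam) ^ r)
      (Polynomial.X - Polynomial.C lam) hd (Polynomial.natDegree_X_sub_C_le lam)
    rw [pow_succ, h1, ih, pow_succ]
    congr 1
    rw [Polynomial.homogenize_sub, Polynomial.homogenize_X one_ne_zero, Polynomial.homogenize_C]
    simp

set_option maxHeartbeats 1000000 in
lemma core {K : Type*} [Field K] (φ : B K →ₐ[K] Polynomial (B K))
    (h0 : ∀ g, (φ g).eval 0 = g) (h : B K) (hne : h ≠ 0) (hi : φ h = Polynomial.C h)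
    (a b d : ℕ) (ha : 0 < a) (hb : 0 < b) (hab : Nat.Coprime a b) (hdpos : 0 < d)
    (hd : ∀ s ∈ h.support, s 0 * a + s 1 * b = d)
    (hα : 0 < (φ (X 0)).natDegree) (hβ : 0 < (φ (X 1)).natDegree)
    (heq : b * (φ (X 0)).natDegree = a * (φ (X 1)).natDegree) :
    (a = 1 ∨ b = 1) ∧ (∃ t ∈ h.support, t 1 = 0) ∧ ∃ (c lam : K) (g : ℕ), c ≠ 0 ∧ d = a * b * g ∧
      h = C c * (X 0 ^ b - C lam * X 1 ^ a) ^ g := by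
  have hX : ∀ i, 0 < (φ (X i)).natDegree → ¬ X i ∣ h := by
    intro i hp hdv
    rw [factor φ h0 h _ hne hi hdv] at hp
    simp at hp
  obtain ⟨s, hs, hs0⟩ := exists_not_dvd h 0 (hX 0 hα)
  obtain ⟨t, ht, ht1⟩ := exists_not_dvd h 1 (hX 1 hβ)
  have hbd : b ∣ d := ⟨s 1, by rw [← hd s hs, hs0]; ring⟩
  have had : a ∣ d := ⟨t 0, by rw [← hd t ht, ht1]; ring⟩
  obtain ⟨g, rfl⟩ := hab.mul_dvd_of_dvd_of_dvd had hbd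
  have hg : 0 < g := Nat.pos_of_mul_pos_left hdpos
  obtain ⟨H, hH, hhH⟩ := exists_H h a b g ha hb hab hd
  have hH0 : H ≠ 0 := by
    rintro rfl
    apply hne
    rw [hhH]; simp
  set P := φ (X 0) with hP
  set Q := φ (X 1) with hQ
  have hPne : P ≠ 0 := by intro h; simp [h] at hα
  have hQne : Q ≠ 0 := by intro h; simp [h] at hβ
  set δ := b * P.natDegree with hδ
  have hδ0 : 0 < δ := Nat.mul_pos hb hα
  have hdP : (P ^ b).natDegree = δ := Polynomial.natDegree_pow _ _
  have hdQ : (Q ^ a).natDegree = δ := by rw [Polynomial.natDegree_pow, heq]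
  have himg : ∀ F : B K, φ (aeval ![(X 0 : B K) ^ b, X 1 ^ a] F) = aeval ![P ^ b, Q ^ a] F := by
    intro F
    rw [← AlgHom.comp_apply]
    congr 1
    apply MvPolynomial.algHom_ext
    intro i
    fin_cases i <;> simp [hP, hQ]
  -- the top coefficient of an invariant form vanishes
  have htop : ∀ (G : Polynomial K) (N : ℕ), 0 < N →
      φ (aeval ![(X 0 : B K) ^ b, X 1 ^ a] (G.homogenize N)) =
        Polynomial.C (aeval ![(X 0 : B K) ^ b, X 1 ^ a] (G.homogenize N)) →
      aeval ![P.leadingCoeff ^ b, Q.leadingCoeff ^ a] (G.homogenize N) = 0 := by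
    intro G N hN hG
    have h1 := coeff_hom G N δ (P ^ b) (Q ^ a) hdP.le hdQ.le
    rw [← himg, hG, Polynomial.coeff_C_of_ne_zero (Nat.mul_pos hN hδ0).ne'] at h1
    rw [h1]
    congr 1
    rw [← Polynomial.leadingCoeff_pow, ← Polynomial.leadingCoeff_pow, Polynomial.leadingCoeff,
      Polynomial.leadingCoeff, hdP, hdQ]
  have hlP : P.leadingCoeff ^ b ≠ 0 := pow_ne_zero _ (Polynomial.leadingCoeff_ne_zero.mpr hPne)
  have hlQ : Q.leadingCoeff ^ a ≠ 0 := pow_ne_zero _ (Polynomial.leadingCoeff_ne_zero.mpr hQne)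
  obtain ⟨lam, hlam, hPQ⟩ := ratio_const _ _ hlP hlQ H hH0 g hH (htop H g hg (by rw [← hhH, hi]))
  obtain ⟨G, hHG, hGd⟩ := Polynomial.exists_eq_pow_rootMultiplicity_mul_and_not_dvd H hH0 lam
  set r := H.rootMultiplicity lam with hr
  have hG0 : G ≠ 0 := by rintro rfl; simp at hGd
  have hdeg : H.natDegree = r + G.natDegree := by
    conv_lhs => rw [hHG]
    rw [Polynomial.natDegree_mul (pow_ne_zero _ (Polynomial.X_sub_C_ne_zero _)) hG0,
      Polynomial.natDegree_pow, Polynomial.natDegree_X_sub_C, mul_one]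
  obtain ⟨N, rfl⟩ := Nat.exists_eq_add_of_le (show r ≤ g by omega)
  have hfac : h = (X 0 ^ b - C lam * X 1 ^ a) ^ r *
      aeval ![(X 0 : B K) ^ b, X 1 ^ a] (G.homogenize N) := by
    rw [hhH]
    conv_lhs => rw [hHG]
    rw [Polynomial.homogenize_mul _ _ (by
        rw [Polynomial.natDegree_pow, Polynomial.natDegree_X_sub_C, mul_one]) (by omega), pow_homogenize,
      map_mul]
    simp [MvPolynomial.algebraMap_eq]
  have hN : N = 0 := by
    by_contra hN
    have h1 := htop G N (Nat.pos_of_ne_zero hN)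
      (factor φ h0 h _ hne hi ⟨_, by rw [mul_comm]; exact hfac⟩)
    rw [hPQ, aeval_homogenize_mul _ _ _ _ (by omega)] at h1
    have h2 := (mul_eq_zero.mp h1).resolve_left (pow_ne_zero _ hlQ)
    rw [← MvPolynomial.algebraMap_eq, Polynomial.aeval_algebraMap_apply, MvPolynomial.algebraMap_eq,
      C_eq_zero] at h2
    exact hGd (Polynomial.dvd_iff_isRoot.mpr (by simpa [Polynomial.coe_aeval_eq_eval] using h2))
  subst hN
  have hGc := Polynomial.eq_C_of_natDegree_eq_zero (show G.natDegree = 0 by omega)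
  have hc0 : G.coeff 0 ≠ 0 := by
    intro h; rw [h] at hGc; apply hG0; rw [hGc]; simp
  rw [hGc] at hfac
  have hfac' : h = C (G.coeff 0) * (X 0 ^ b - C lam * X 1 ^ a) ^ (r + 0) := by
    rw [hfac]; simp [MvPolynomial.algebraMap_eq]; ring
  refine ⟨?_, ⟨t, ht, ht1⟩, G.coeff 0, lam, r + 0, hc0, rfl, hfac'⟩
  have hinv := factor φ h0 h (X 0 ^ b - C lam * X 1 ^ a) hne hi (by
    rw [hfac']
    exact (dvd_pow_self _ hg.ne').mul_left _)
  refine deriv_step P Q a b ha hb hab lam hlam (h0 _) (h0 _) hα hβ ?_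
  rw [← hinv, map_sub, map_mul, map_pow, map_pow, ← MvPolynomial.algebraMap_eq, φ.commutes]
  rfl

/-- `f` is a polynomial in some variable. -/
def Good (K : Type*) [Field K] (f : B K) : Prop :=
  ∃ w : B K, (∃ σ : B K ≃ₐ[K] B K, σ w = X 0) ∧ f ∈ Algebra.adjoin K {w}

lemma Good.of_conj {K : Type*} [Field K] {f : B K} (σ : B K ≃ₐ[K] B K) (h : Good K (σ f)) :
    Good K f := by
  obtain ⟨w, ⟨τ, hτ⟩, hw⟩ := h
  refine ⟨σ.symm w, ⟨σ.trans τ, by simp [hτ]⟩, ?_⟩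
  have h1 : σ.symm.toAlgHom (σ f) ∈ (Algebra.adjoin K {w}).map σ.symm.toAlgHom :=
    ⟨_, hw, rfl⟩
  rw [AlgHom.map_adjoin] at h1
  simpa using h1

/-- Swapping the two coordinates. -/
def swp (K : Type*) [Field K] : B K ≃ₐ[K] B K := renameEquiv K (Equiv.swap 0 1)

lemma degreeOf_swp {K : Type*} [Field K] (f : B K) :
    degreeOf 0 (swp K f) = degreeOf 1 f ∧ degreeOf 1 (swp K f) = degreeOf 0 f := by
  have h1 := degreeOf_rename_of_injective (p := f) (Equiv.swap (0 : Fin 2) 1).injective 1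
  have h2 := degreeOf_rename_of_injective (p := f) (Equiv.swap (0 : Fin 2) 1).injective 0
  rw [Equiv.swap_apply_right] at h1
  rw [Equiv.swap_apply_left] at h2
  exact ⟨h1, h2⟩

lemma good_of_degreeOf_one {K : Type*} [Field K] (f : B K) (h : degreeOf 1 f = 0) : Good K f := by
  refine ⟨X 0, ⟨AlgEquiv.refl, rfl⟩, ?_⟩
  rw [f.as_sum]
  refine Subalgebra.sum_mem _ fun s hs => ?_
  have h1 : s 1 = 0 := by
    have := (degreeOf_le_iff (n := 1) (f := f) (d := 0)).mp h.le s hs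
    omega
  have : (monomial s (coeff s f) : B K) = aeval X (monomial s (coeff s f)) := by simp
  rw [this, aeval_two, h1, pow_zero, mul_one]
  exact Subalgebra.mul_mem _ (Subalgebra.algebraMap_mem _ _)
    (Subalgebra.pow_mem _ (Algebra.self_mem_adjoin_singleton _ _) _)

lemma good_of_degreeOf_zero {K : Type*} [Field K] (f : B K) (h : degreeOf 0 f = 0) : Good K f :=
  Good.of_conj (swp K) (good_of_degreeOf_one _ ((degreeOf_swp f).2.trans h))

lemma reduce {K : Type*} [Field K] (f : B K) (c lam : K) (m a : ℕ) (hm : 0 < m) (ha : 0 < a)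
    (hd : ∀ s ∈ f.support, Finsupp.weight ![a, 1] s ≤ a * m)
    (hh : weightedHomogeneousComponent ![a, 1] (a * m) f =
      C c * (X 0 - C lam * X 1 ^ a) ^ m) :
    ∃ σ : B K ≃ₐ[K] B K, degreeOf 0 (σ f) ≤ m ∧ degreeOf 1 (σ f) < a * m := by
  let σ : B K ≃ₐ[K] B K := AlgEquiv.ofAlgHom
    (aeval ![X 0 + C lam * X 1 ^ a, X 1]) (aeval ![X 0 - C lam * X 1 ^ a, X 1])
    (by
      apply MvPolynomial.algHom_ext
      intro i
      fin_cases i <;> simp [MvPolynomial.algebraMap_eq])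
    (by
      apply MvPolynomial.algHom_ext
      intro i
      fin_cases i <;> simp [MvPolynomial.algebraMap_eq])
  have hσ : ∀ g, σ g = aeval ![X 0 + C lam * X 1 ^ a, X 1] g := fun g => rfl
  set h := weightedHomogeneousComponent ![a, 1] (a * m) f with hhdef
  have hσh : σ h = C c * X 0 ^ m := by
    rw [hh, hσ]
    simp [MvPolynomial.algebraMap_eq]
  have hrest : ∀ s ∈ (f - h).support, Finsupp.weight ![a, 1] s < a * m := by
    intro s hs
    rw [mem_support_iff, coeff_sub, hhdef, coeff_weightedHomogeneousComponent] at hs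
    split_ifs at hs with h1
    · simp at hs
    · rw [sub_zero] at hs
      exact lt_of_le_of_ne (hd s (mem_support_iff.mpr hs)) h1
  have hw0 : IsWeightedHomogeneous ![a, 1] (X 0 + C lam * X 1 ^ a : B K) a := by
    apply IsWeightedHomogeneous.add
    · simpa using isWeightedHomogeneous_X K ![a, 1] 0
    · have h1 := (isWeightedHomogeneous_X K ![a, 1] 1).pow a
      have h2 := (isWeightedHomogeneous_C ![a, 1] lam).mul h1
      simpa using h2
  have hw1 : IsWeightedHomogeneous ![a, 1] (X 1 : B K) 1 := by
    simpa using isWeightedHomogeneous_X K ![a, 1] 1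
  have hmon : ∀ (s : Fin 2 →₀ ℕ) (e : K),
      IsWeightedHomogeneous ![a, 1] (σ (monomial s e)) (Finsupp.weight ![a, 1] s) := by
    intro s e
    rw [hσ, aeval_two, weight_two, MvPolynomial.algebraMap_eq]
    have h2 := (isWeightedHomogeneous_C ![a, 1] e).mul ((hw0.pow (s 0)).mul (hw1.pow (s 1)))
    simpa using h2
  have hsupp : ∀ t ∈ (σ f).support, t = Finsupp.single 0 m ∨ t 0 * a + t 1 < a * m := by
    intro t ht
    by_contra hcon
    push Not at hcon
    obtain ⟨h1, h2⟩ := hcon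
    rw [mem_support_iff] at ht
    apply ht
    have h3 : σ f = C c * X 0 ^ m + σ (f - h) := by rw [← hσh, ← map_add]; congr 1; ring
    rw [h3, coeff_add, coeff_C_mul, coeff_X_pow, if_neg (fun h => h1 h.symm), mul_zero, zero_add,
      (f - h).as_sum, map_sum, coeff_sum]
    apply Finset.sum_eq_zero
    intro s hs
    by_contra h4
    have h5 := hmon s _ h4
    have h6 := hrest s hs
    rw [← h5, weight_two] at h6
    simp at h6
    omega
  refine ⟨σ, ?_, ?_⟩
  · rw [degreeOf_le_iff]
    intro t ht
    rcases hsupp t ht with rfl | h1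
    · simp
    · nlinarith
  · rw [degreeOf_lt_iff (Nat.mul_pos ha hm)]
    intro t ht
    rcases hsupp t ht with rfl | h1
    · simp [ha, hm]
    · have := Nat.zero_le (t 0 * a)
      omega

lemma exists_degreeOf {K : Type*} [Field K] (f : B K) (i : Fin 2) (h : 0 < degreeOf i f) :
    ∃ s ∈ f.support, s i = degreeOf i f := by
  have hf : f.support.Nonempty := by
    rw [Finset.nonempty_iff_ne_empty]
    intro h1
    rw [support_eq_empty] at h1
    simp [h1] at h
  obtain ⟨s, hs, h1⟩ := Finset.exists_mem_eq_sup f.support hf (fun s => s i)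
  exact ⟨s, hs, by rw [degreeOf_eq_sup, h1]⟩

set_option maxHeartbeats 1000000 in
lemma step {K : Type*} [Field K] (f : B K) (hf : Inv K f) (hm : 0 < degreeOf 0 f)
    (hmn : degreeOf 0 f ≤ degreeOf 1 f) :
    ∃ σ : B K ≃ₐ[K] B K,
      degreeOf 0 (σ f) + degreeOf 1 (σ f) < degreeOf 0 f + degreeOf 1 f := by
  obtain ⟨u, hu, hu0⟩ := exists_degreeOf f 0 hm
  obtain ⟨v, hv, hv1⟩ := exists_degreeOf f 1 (hm.trans_le hmn)
  have hle0 := (degreeOf_le_iff (n := 0) (f := f) (d := degreeOf 0 f)).mp le_rfl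
  have hle1 := (degreeOf_le_iff (n := 1) (f := f) (d := degreeOf 1 f)).mp le_rfl
  set m := degreeOf 0 f with hmdef
  set n := degreeOf 1 f with hndef
  obtain ⟨b, a, hba, hmb, hna⟩ := Nat.exists_coprime m n
  have hg : 0 < Nat.gcd m n := Nat.gcd_pos_of_pos_left _ hm
  have hb : 0 < b := by
    rcases Nat.eq_zero_or_pos b with h | h
    · rw [h] at hmb; omega
    · exact h
  have hble : b ≤ a := by
    apply Nat.le_of_mul_le_mul_right (a := b) (b := a) (c := Nat.gcd m n) _ hg
    rw [← hmb, ← hna]; exact hmn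
  have ha : 0 < a := by omega
  have hmanb : m * a = n * b := by
    rw [hmb]
    conv_rhs => rw [hna]
    ring
  obtain ⟨z, hz, hzd⟩ := Finset.exists_max_image f.support (Finsupp.weight ![a, b]) ⟨u, hu⟩
  set d := Finsupp.weight ![a, b] z with hd
  have hwt : ∀ s : Fin 2 →₀ ℕ, Finsupp.weight ![a, b] s = s 0 * a + s 1 * b := by
    intro s; rw [weight_two]; simp
  set h := weightedHomogeneousComponent ![a, b] d f with hhdef
  have hsupp : ∀ s, s ∈ h.support ↔ s 0 * a + s 1 * b = d ∧ s ∈ f.support := by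
    intro s
    rw [mem_support_iff, hhdef, coeff_weightedHomogeneousComponent, ← hwt, mem_support_iff]
    split_ifs with h1 <;> simp [h1]
  have hzh : z ∈ h.support := (hsupp z).mpr ⟨(hwt z).symm, hz⟩
  have hhne : h ≠ 0 := by
    intro h1; rw [h1] at hzh; simp at hzh
  obtain ⟨φ, h0, hnt, hi⟩ := hf.top ![a, b] d hzd
  rw [← hhdef] at hi
  have hhd : ∀ s ∈ h.support, s 0 * a + s 1 * b = d := fun s hs => ((hsupp s).mp hs).1
  have hud := hzd u hu
  rw [hwt, hu0] at hud
  have hvd := hzd v hv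
  rw [hwt, hv1] at hvd
  have hz1 := hhd z hzh
  have hma : 0 < m * a := Nat.mul_pos hm ha
  rcases lt_trichotomy (a * (φ (X 1)).natDegree) (b * (φ (X 0)).natDegree) with hlt | heq | hgt
  · exfalso
    have h1 := dir_zero φ h0 h hi a b d hb hhd hlt
    have h2 := h1 z hzh
    have h3 := Nat.mul_le_mul_right b (hle1 z hz)
    rw [h2] at hz1
    have h4 : u ∈ h.support := (hsupp u).mpr ⟨by rw [hu0]; omega, hu⟩
    have := h1 u h4
    omega
  · have hαβ : 0 < (φ (X 0)).natDegree ∧ 0 < (φ (X 1)).natDegree := by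
      rcases Nat.eq_zero_or_pos (φ (X 0)).natDegree with h1 | h1
      · exfalso
        rw [h1, mul_zero] at heq
        have h2 := (Nat.mul_eq_zero.mp heq).resolve_left ha.ne'
        obtain ⟨i, hi⟩ := hnt
        apply hi
        apply eq_C_of (h0 _)
        fin_cases i
        · exact h1
        · exact h2
      · refine ⟨h1, Nat.pos_of_ne_zero fun h2 => ?_⟩
        rw [h2, mul_zero] at heq
        exact (Nat.mul_pos hb h1).ne heq
    obtain ⟨hor, ⟨t, ht, ht1⟩, c, lam, g, hc, hdg, hform⟩ :=
      core φ h0 h hhne hi a b d ha hb hba.symm (by omega) hhd hαβ.1 hαβ.2 heq.symm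
    have hb1 : b = 1 := by omega
    have h5 := hhd t ht
    have h6 := Nat.mul_le_mul_right a (hle0 t ((hsupp t).mp ht).2)
    rw [ht1] at h5
    have hdm : d = a * m := by rw [Nat.mul_comm a m]; omega
    rw [hb1] at hform hdg hzd
    have hgm : g = m := by
      rw [hdm, mul_one] at hdg
      exact (Nat.eq_of_mul_eq_mul_left ha hdg).symm
    rw [hgm, pow_one, hhdef, hb1, hdm] at hform
    obtain ⟨σ, h7, h8⟩ := reduce f c lam m a hm ha (by
      intro s hs; rw [← hdm]; exact hzd s hs) hform
    refine ⟨σ, ?_⟩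
    have : a * m = n := by rw [Nat.mul_comm, hmanb, hb1, mul_one]
    omega
  · exfalso
    have h1 := dir_one φ h0 h hi a b d ha hhd hgt
    have h2 := h1 z hzh
    have h3 := Nat.mul_le_mul_right a (hle0 z hz)
    rw [h2] at hz1
    have h4 : v ∈ h.support := (hsupp v).mpr ⟨by rw [hv1]; omega, hv⟩
    have := h1 v h4
    omega

lemma main {K : Type*} [Field K] : ∀ (N : ℕ) (f : B K), Inv K f →
    degreeOf 0 f + degreeOf 1 f = N → Good K f := by
  intro N
  induction N using Nat.strong_induction_on with
  | _ N ih =>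
    intro f hf hN
    rcases Nat.eq_zero_or_pos (degreeOf 0 f) with h0 | h0
    · exact good_of_degreeOf_zero f h0
    rcases Nat.eq_zero_or_pos (degreeOf 1 f) with h1 | h1
    · exact good_of_degreeOf_one f h1
    rcases le_total (degreeOf 0 f) (degreeOf 1 f) with hle | hle
    · obtain ⟨σ, hσ⟩ := step f hf h0 hle
      exact Good.of_conj σ (ih _ (hN ▸ hσ) _ (hf.conj σ) rfl)
    · have hs := degreeOf_swp f
      obtain ⟨σ, hσ⟩ := step (swp K f) (hf.conj _) (by omega) (by omega)
      exact Good.of_conj (swp K) (Good.of_conj σ (ih _ (by omega) _ ((hf.conj _).conj σ) rfl))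

end RedVar

/-- **Lemma 3.8 (Blanc–van Santen).** Let `p ∈ k[t]` be irreducible and `k_p = k[t]/(p)`.
If `v ∈ k[t][x,y]` is a variable of the `k(t)`-algebra `k(t)[x,y]`, then its reduction
`v₀ ∈ k_p[x,y]` lies in `k_p[w]` for some variable `w` of the `k_p`-algebra `k_p[x,y]`. -/
theorem reduction_of_variable_mod_p
    (k : Type*) [Field k] (p : Polynomial k) (hp : Irreducible p)
    (v : MvPolynomial (Fin 2) (Polynomial k))
    (hv : ∃ ψ : MvPolynomial (Fin 2) (RatFunc k) ≃ₐ[RatFunc k] MvPolynomial (Fin 2) (RatFunc k),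
        ψ (MvPolynomial.map (algebraMap (Polynomial k) (RatFunc k)) v) = X 0) :
    ∃ w : MvPolynomial (Fin 2) (Polynomial k ⧸ Ideal.span {p}),
      (∃ σ : MvPolynomial (Fin 2) (Polynomial k ⧸ Ideal.span {p}) ≃ₐ[Polynomial k ⧸ Ideal.span {p}]
            MvPolynomial (Fin 2) (Polynomial k ⧸ Ideal.span {p}),
          σ w = X 0) ∧
      MvPolynomial.map (Ideal.Quotient.mk (Ideal.span {p})) v ∈
        Algebra.adjoin (Polynomial k ⧸ Ideal.span {p}) {w} := by
  have hmax : (Ideal.span {p}).IsMaximal := PrincipalIdealRing.isMaximal_of_irreducible hp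
  let _ : Field (Polynomial k ⧸ Ideal.span {p}) := Ideal.Quotient.field _
  obtain ⟨ψ, hψ⟩ := hv
  have h1 : RedVar.Inv (RatFunc k) (MvPolynomial.map (algebraMap (Polynomial k) (RatFunc k)) v) := by
    have h2 := (RedVar.inv_X (RatFunc k)).conj ψ.symm
    rwa [← hψ, AlgEquiv.symm_apply_apply] at h2
  have h3 := RedVar.degen p hp (Ideal.Quotient.mk (Ideal.span {p}))
    (fun a => by rw [Ideal.Quotient.eq_zero_iff_mem, Ideal.mem_span_singleton]) v h1
  exact RedVar.main _ _ h3 rfl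
end
end

section
/- Let k be a field and P ∈ k[x,y]. Then the following are equivalent: (1) P is a variable of the k-algebra k[x,y], i.e., some k-algebra automorphism of k[x,y] sends P to x; (2) the k[t]-algebra k[t][x,y]/(P − t) is isomorphic to a polynomial ring in one variable over k[t]; (3) the k(t)-algebra k(t)[x,y]/(P − t) is isomorphic to a polynomial ring in one variable over k(t). -/
open MvPolynomial

noncomputable section

/-- bivariate evaluation at `(f, g)`. -/
abbrev bev {k A : Type*} [Field k] [CommRing A] [Algebra k A] (f g : A) :
    Polynomial (Polynomial k) →ₐ[k] A := Polynomial.aevalAeval f g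

lemma bev_C {k A : Type*} [Field k] [CommRing A] [Algebra k A] (f g : A) (p : Polynomial k) :
    bev f g (Polynomial.C p) = Polynomial.aeval f p := by simp [bev]

lemma bev_X {k A : Type*} [Field k] [CommRing A] [Algebra k A] (f g : A) :
    bev (k := k) f g Polynomial.X = g := by simp [bev]

lemma bev_range {k A : Type*} [Field k] [CommRing A] [Algebra k A] (f g : A) :
    (bev (k := k) f g).range = Algebra.adjoin k {f, g} := by
  apply le_antisymm
  · rintro _ ⟨Q, rfl⟩
    show bev f g Q ∈ _
    induction Q using Polynomial.induction_on' with
    | add p q hp hq => rw [map_add]; exact add_mem hp hq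
    | monomial n a =>
      rw [← Polynomial.C_mul_X_pow_eq_monomial, map_mul, map_pow, bev_C, bev_X]
      refine mul_mem ?_ (pow_mem (Algebra.subset_adjoin (by simp)) _)
      exact Algebra.adjoin_mono (s := {f}) (by simp)
        (Polynomial.aeval_mem_adjoin_singleton k f (p := a))
  · rw [Algebra.adjoin_le_iff]
    rintro x (rfl | rfl)
    · exact ⟨Polynomial.C Polynomial.X, by simp [bev]⟩
    · exact ⟨Polynomial.X, by simp [bev]⟩

/-- every element lies, up to a denominator in `k[f]`, in `k[f, g]` -/
def GenBy (k : Type*) {A : Type*} [Field k] [CommRing A] [Algebra k A] (f g : A) : Prop :=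
  ∀ h : A, ∃ s : Polynomial k, s ≠ 0 ∧ Polynomial.aeval f s * h ∈ Algebra.adjoin k {f, g}

lemma aeval_mem_adjoin_pair {k A : Type*} [Field k] [CommRing A] [Algebra k A] (f g : A)
    (p : Polynomial k) : Polynomial.aeval f p ∈ Algebra.adjoin k {f, g} := by
  rw [← bev_range]; exact ⟨_, bev_C f g p⟩

/-- elements that lie in `B` up to denominator in `k[f]` -/
def locSub {k A : Type*} [Field k] [CommRing A] [Algebra k A] (f : A) (B : Subalgebra k A)
    (hf : f ∈ B) : Subalgebra k A where
  carrier := {h | ∃ s : Polynomial k, s ≠ 0 ∧ Polynomial.aeval f s * h ∈ B}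
  mul_mem' := by
    rintro a b ⟨s, hs, ha⟩ ⟨t, ht, hb⟩
    refine ⟨s * t, mul_ne_zero hs ht, ?_⟩
    have := mul_mem ha hb
    rw [map_mul]; convert this using 1; ring
  add_mem' := by
    rintro a b ⟨s, hs, ha⟩ ⟨t, ht, hb⟩
    refine ⟨s * t, mul_ne_zero hs ht, ?_⟩
    have h1 : ∀ p : Polynomial k, Polynomial.aeval f p ∈ B := fun p =>
      Algebra.adjoin_le (S := B) (by simp [hf])
        (Polynomial.aeval_mem_adjoin_singleton k f (p := p))
    have := add_mem (mul_mem (h1 t) ha) (mul_mem (h1 s) hb)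
    rw [map_mul]; convert this using 1; ring
  algebraMap_mem' := fun r => ⟨1, one_ne_zero, by simpa using B.algebraMap_mem r⟩

lemma genBy_of_XY {k : Type*} [Field k] (f g : MvPolynomial (Fin 2) k)
    (h : ∀ i, ∃ s : Polynomial k, s ≠ 0 ∧ Polynomial.aeval f s * X i ∈ Algebra.adjoin k {f, g}) :
    GenBy k f g := by
  have hf : f ∈ Algebra.adjoin k {f, g} := Algebra.subset_adjoin (by simp)
  have : (⊤ : Subalgebra k (MvPolynomial (Fin 2) k)) ≤ locSub f _ hf := by
    rw [← MvPolynomial.adjoin_range_X, Algebra.adjoin_le_iff]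
    rintro _ ⟨i, rfl⟩
    exact h i
  intro x
  exact this (Algebra.mem_top (x := x))

lemma transcendental_of_nonconst {k : Type*} [Field k] {f : MvPolynomial (Fin 2) k}
    (hf : f.totalDegree ≠ 0) : Transcendental k f := by
  intro h
  have hf0 : f ≠ 0 := by rintro rfl; simp at hf
  have : IsUnit f := by
    have h1 : IsIntegral k f := isAlgebraic_iff_isIntegral.mp h
    exact IsIntegral.isUnit h1 hf0
  exact hf (isUnit_iff_totalDegree_of_isReduced.mp this).2

lemma bev_injective {k : Type*} [Field k] {f g : MvPolynomial (Fin 2) k}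
    (hf : Transcendental k f) (hg : GenBy k f g) : Function.Injective (bev (k := k) f g) := by
  have hr : Set.range ![f, g] = {f, g} := by
    simp [Matrix.range_cons, Set.pair_comm]
  have alg : Algebra.IsAlgebraic (Algebra.adjoin k (Set.range ![f, g])) (MvPolynomial (Fin 2) k) := by
    rw [hr]
    constructor
    intro h
    obtain ⟨s, hs, hm⟩ := hg h
    refine ⟨Polynomial.C ⟨_, aeval_mem_adjoin_pair f g s⟩ * Polynomial.X - Polynomial.C ⟨_, hm⟩, ?_, ?_⟩
    · intro h0
      have := congrArg (fun p => Polynomial.coeff p 1) h0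
      simp [Polynomial.coeff_C] at this
      have := congrArg Subtype.val this
      exact hs (transcendental_iff.mp hf s this)
    · simp [Algebra.algebraMap_eq_smul_one, Subalgebra.smul_def]
  have hb := Algebra.IsAlgebraic.isTranscendenceBasis_of_lift_le_trdeg_of_finite k ![f, g] (by
    rw [MvPolynomial.trdeg_of_isDomain]; simp)
  have hi : AlgebraicIndependent k ![f, g] := hb.1
  have : (bev (k := k) f g) = (aeval ![f, g]).comp
      (Polynomial.Bivariate.equivMvPolynomial k).toAlgHom := by
    ext <;> simp [bev]
  rw [this]
  exact Function.Injective.comp (g := aeval (R := k) ![f, g]) hi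
    (Polynomial.Bivariate.equivMvPolynomial k).injective

/-- The Jacobian determinant -/
def jac {k : Type*} [Field k] (f g : MvPolynomial (Fin 2) k) : MvPolynomial (Fin 2) k :=
  pderiv 0 f * pderiv 1 g - pderiv 1 f * pderiv 0 g

lemma chain_rule {k : Type*} [Field k] {f g q : MvPolynomial (Fin 2) k}
    (hq : q ∈ Algebra.adjoin k {f, g}) : ∃ u v : MvPolynomial (Fin 2) k,
      ∀ i, pderiv i q = u * pderiv i f + v * pderiv i g := by
  induction hq using Algebra.adjoin_induction with
  | mem x hx =>
    rcases hx with rfl | rfl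
    · exact ⟨1, 0, by simp⟩
    · exact ⟨0, 1, by simp⟩
  | algebraMap r => exact ⟨0, 0, by simp [MvPolynomial.algebraMap_eq]⟩
  | add x y _ _ hx hy =>
    obtain ⟨u, v, h⟩ := hx
    obtain ⟨u', v', h'⟩ := hy
    exact ⟨u + u', v + v', fun i => by rw [map_add, h, h']; ring⟩
  | mul x y _ _ hx hy =>
    obtain ⟨u, v, h⟩ := hx
    obtain ⟨u', v', h'⟩ := hy
    exact ⟨u * y + x * u', v * y + x * v', fun i => by rw [pderiv_mul, h, h']; ring⟩

lemma pderiv_aeval' {k : Type*} [Field k] (f : MvPolynomial (Fin 2) k) (s : Polynomial k) (i) :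
    pderiv i (Polynomial.aeval f s) = Polynomial.aeval f s.derivative * pderiv i f := by
  rw [Derivation.map_aeval]; rfl

lemma jac_dvd {k : Type*} [Field k] {f g : MvPolynomial (Fin 2) k} (s t : Polynomial k)
    (h0 : Polynomial.aeval f s * X 0 ∈ Algebra.adjoin k {f, g})
    (h1 : Polynomial.aeval f t * X 1 ∈ Algebra.adjoin k {f, g}) :
    jac f g ∣ Polynomial.aeval f (s * t) := by
  obtain ⟨u, v, h⟩ := chain_rule h0
  obtain ⟨u', v', h'⟩ := chain_rule h1
  have a0 := h 0
  have a1 := h 1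
  have b0 := h' 0
  have b1 := h' 1
  simp only [pderiv_mul, pderiv_aeval'] at a0 a1 b0 b1
  simp [pderiv_X] at a0 a1 b0 b1
  set S := Polynomial.aeval f s
  set T := Polynomial.aeval f t
  set S' := Polynomial.aeval f s.derivative
  set T' := Polynomial.aeval f t.derivative
  refine ⟨(u - S' * X 0) * v' - (u' - T' * X 1) * v, ?_⟩
  rw [map_mul, jac]
  change S * T = _
  have e1 : S = (u - S' * X 0) * pderiv 0 f + v * pderiv 0 g := by linear_combination a0
  have e2 : 0 = (u - S' * X 0) * pderiv 1 f + v * pderiv 1 g := by linear_combination a1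
  have e3 : 0 = (u' - T' * X 1) * pderiv 0 f + v' * pderiv 0 g := by linear_combination b0
  have e4 : T = (u' - T' * X 1) * pderiv 1 f + v' * pderiv 1 g := by linear_combination b1
  generalize (u - S' * X 0) = al at *
  generalize (u' - T' * X 1) = be at *
  linear_combination T * e1 + (al * pderiv 0 f + v * pderiv 0 g) * e4 -
    (be * pderiv 0 f + v' * pderiv 0 g) * e2 

lemma jac_affine {k : Type*} [Field k] (f g : MvPolynomial (Fin 2) k) (a b : Polynomial k) :
    jac f (Polynomial.aeval f a * g + Polynomial.aeval f b) = Polynomial.aeval f a * jac f g := by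
  simp only [jac, map_add, pderiv_mul, pderiv_aeval']
  ring

lemma aeval_ne_zero' {k : Type*} [Field k] {f : MvPolynomial (Fin 2) k}
    (hf : Transcendental k f) {s : Polynomial k} (hs : s ≠ 0) : Polynomial.aeval f s ≠ 0 :=
  fun h => hs (transcendental_iff.mp hf s h)

lemma natDegree_eq_zero_of_totalDegree {k : Type*} [Field k] {f : MvPolynomial (Fin 2) k}
    (hf : Transcendental k f) {s : Polynomial k}
    (hs : (Polynomial.aeval f s).totalDegree = 0) : ∃ c, s = Polynomial.C c := by
  rw [totalDegree_eq_zero_iff_eq_C] at hs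
  refine ⟨coeff 0 (Polynomial.aeval f s), ?_⟩
  rw [← sub_eq_zero]
  apply transcendental_iff.mp hf
  rw [map_sub, Polynomial.aeval_C, MvPolynomial.algebraMap_eq, ← hs, sub_self]

lemma poly_of_ratio {k : Type*} [Field k] {f : MvPolynomial (Fin 2) k}
    (hf : Transcendental k f) {s U : Polynomial k} (hs : s ≠ 0) {u : MvPolynomial (Fin 2) k}
    (h : Polynomial.aeval f s * u = Polynomial.aeval f U) : ∃ W : Polynomial k, u = Polynomial.aeval f W := by
  classical
  obtain ⟨s', hs'⟩ := EuclideanDomain.gcd_dvd_left s U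
  obtain ⟨U', hU'⟩ := EuclideanDomain.gcd_dvd_right s U
  set d := EuclideanDomain.gcd s U with hd
  have hd0 : d ≠ 0 := by rintro h0; rw [h0, zero_mul] at hs'; exact hs hs'
  have hco : ∃ α β, α * s' + β * U' = 1 := by
    refine ⟨EuclideanDomain.gcdA s U, EuclideanDomain.gcdB s U, ?_⟩
    apply mul_left_cancel₀ hd0
    have := EuclideanDomain.gcd_eq_gcd_ab s U
    rw [← hd] at this
    calc _ = (d * s') * EuclideanDomain.gcdA s U + (d * U') * EuclideanDomain.gcdB s U := by ring
      _ = _ := by rw [← hs', ← hU', ← this, mul_one]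
  obtain ⟨α, β, hab⟩ := hco
  have h2 : Polynomial.aeval f s' * u = Polynomial.aeval f U' := by
    apply mul_left_cancel₀ (aeval_ne_zero' hf hd0)
    rw [← mul_assoc, ← map_mul, ← map_mul, ← hs', ← hU', h]
  have hun : IsUnit (Polynomial.aeval f s') := by
    apply IsUnit.of_mul_eq_one (Polynomial.aeval f α + Polynomial.aeval f β * u)
    have := congrArg (Polynomial.aeval f) hab
    simp only [map_add, map_mul, map_one] at this
    linear_combination this + Polynomial.aeval f β * h2
  obtain ⟨c, hc⟩ := natDegree_eq_zero_of_totalDegree hf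
    (isUnit_iff_totalDegree_of_isReduced.mp hun).2
  have hc0 : c ≠ 0 := by
    rintro rfl
    rw [hc] at hun; simp at hun
  refine ⟨Polynomial.C c⁻¹ * U', ?_⟩
  rw [map_mul, ← h2, hc, ← mul_assoc, ← map_mul, ← Polynomial.C_mul, inv_mul_cancel₀ hc0]
  simp

lemma poly_of_dvd {k : Type*} [Field k] {f g : MvPolynomial (Fin 2) k}
    (hf : Transcendental k f) (hg : GenBy k f g) {p : Polynomial k} (hp : p ≠ 0)
    {u v : MvPolynomial (Fin 2) k}
    (h : u * v = Polynomial.aeval f p) : ∃ W : Polynomial k, u = Polynomial.aeval f W := by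
  have hi := bev_injective hf hg
  obtain ⟨s, hs, hu⟩ := hg u
  obtain ⟨t, ht, hv⟩ := hg v
  rw [← bev_range] at hu hv
  obtain ⟨Q1, hQ1⟩ := hu
  obtain ⟨Q2, hQ2⟩ := hv
  change bev f g Q1 = _ at hQ1
  change bev f g Q2 = _ at hQ2
  have hQ : Q1 * Q2 = Polynomial.C (s * t * p) := by
    apply hi
    rw [map_mul, hQ1, hQ2, bev_C, map_mul, map_mul, ← h]
    ring
  have h0 : Q1 * Q2 ≠ 0 := by
    rw [hQ]; simp [hs, ht, hp]
  have hdeg := Polynomial.natDegree_mul (left_ne_zero_of_mul h0) (right_ne_zero_of_mul h0)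
  rw [hQ, Polynomial.natDegree_C] at hdeg
  have h1 : Q1.natDegree = 0 := by omega
  rw [Polynomial.eq_C_of_natDegree_eq_zero h1, bev_C] at hQ1
  exact poly_of_ratio hf hs hQ1.symm

lemma prime_aeval {k : Type*} [Field k] {f g : MvPolynomial (Fin 2) k}
    (hf : Transcendental k f) (hg : GenBy k f g) {p : Polynomial k} (hp : Irreducible p) :
    Prime (Polynomial.aeval f p) := by
  rw [← irreducible_iff_prime]
  constructor
  · intro hun
    obtain ⟨c, hc⟩ := natDegree_eq_zero_of_totalDegree hf
      (isUnit_iff_totalDegree_of_isReduced.mp hun).2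
    have hc0 : c ≠ 0 := by rintro rfl; simp [hc] at hp
    exact hp.not_isUnit (by rw [hc]; simpa using hc0)
  · intro u v huv
    obtain ⟨U, hU⟩ := poly_of_dvd hf hg hp.ne_zero huv.symm
    obtain ⟨V, hV⟩ := poly_of_dvd hf hg hp.ne_zero ((mul_comm v u).trans huv.symm)
    have : p = U * V := by
      rw [← sub_eq_zero]
      apply transcendental_iff.mp hf
      rw [map_sub, map_mul, huv, hU, hV, sub_self]
    rcases hp.isUnit_or_isUnit this with h | h
    · left; rw [hU]; exact h.map _
    · right; rw [hV]; exact h.map _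

lemma dvd_linear {k : Type*} [Field k] [IsAlgClosed k] {A : Type*} [CommRing A] [Algebra k A]
    {π g : A} (hπ : Prime π) : ∀ (n : ℕ) (q : Polynomial k), q.natDegree = n → q ≠ 0 →
    π ∣ Polynomial.aeval g q → ∃ μ : k, π ∣ g - algebraMap k A μ := by
  intro n
  induction n with
  | zero =>
    intro q hq h0 hd
    exfalso
    rw [Polynomial.eq_C_of_natDegree_eq_zero hq] at hd h0
    apply hπ.not_isUnit
    apply isUnit_of_dvd_unit hd
    have : IsUnit (Polynomial.C (q.coeff 0)) := by simpa using h0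
    exact this.map _
  | succ n ih =>
    intro q hq h0 hd
    obtain ⟨μ, hμ⟩ := IsAlgClosed.exists_root q (by
      rw [Polynomial.degree_eq_natDegree h0, hq]; exact_mod_cast Nat.succ_ne_zero n)
    obtain ⟨q', rfl⟩ := Polynomial.dvd_iff_isRoot.mpr hμ
    rw [map_mul] at hd
    rcases hπ.dvd_or_dvd hd with h | h
    · exact ⟨μ, by simpa using h⟩
    · have h1 : q' ≠ 0 := right_ne_zero_of_mul h0
      refine ih q' ?_ h1 h
      rw [Polynomial.natDegree_mul (Polynomial.X_sub_C_ne_zero μ) h1,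
        Polynomial.natDegree_X_sub_C] at hq
      omega

lemma exists_bad {k : Type*} [Field k] [IsAlgClosed k] {f g : MvPolynomial (Fin 2) k}
    (hf : Transcendental k f) (hg : GenBy k f g) (hne : Algebra.adjoin k {f, g} ≠ ⊤) :
    ∃ (l : k) (Q : Polynomial (Polynomial k)),
      Polynomial.aeval f (Polynomial.X - Polynomial.C l) ∣ bev f g Q ∧
      ¬ Polynomial.C (Polynomial.X - Polynomial.C l) ∣ Q := by
  by_contra! hcon
  apply hne
  have key : ∀ (n : ℕ) (s : Polynomial k), s.natDegree = n → s ≠ 0 → ∀ h,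
      Polynomial.aeval f s * h ∈ Algebra.adjoin k {f, g} → h ∈ Algebra.adjoin k {f, g} := by
    intro n
    induction n with
    | zero =>
      intro s hs h0 h hm
      rw [Polynomial.eq_C_of_natDegree_eq_zero hs] at hm h0
      have hc : s.coeff 0 ≠ 0 := by simpa using h0
      have := Subalgebra.smul_mem _ hm (s.coeff 0)⁻¹
      rw [Polynomial.aeval_C, ← Algebra.smul_def, smul_smul, inv_mul_cancel₀ hc, one_smul] at this
      exact this
    | succ n ih =>
      intro s hs h0 h hm
      obtain ⟨μ, hμ⟩ := IsAlgClosed.exists_root s (by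
        rw [Polynomial.degree_eq_natDegree h0, hs]; exact_mod_cast Nat.succ_ne_zero n)
      obtain ⟨s', rfl⟩ := Polynomial.dvd_iff_isRoot.mpr hμ
      have h1 : s' ≠ 0 := right_ne_zero_of_mul h0
      refine ih s' ?_ h1 h ?_
      · rw [Polynomial.natDegree_mul (Polynomial.X_sub_C_ne_zero μ) h1,
          Polynomial.natDegree_X_sub_C] at hs
        omega
      · rw [← bev_range] at hm
        obtain ⟨Q, hQ⟩ := hm
        change bev f g Q = _ at hQ
        rw [map_mul, mul_assoc] at hQ
        obtain ⟨Q', rfl⟩ := hcon μ Q ⟨_, hQ⟩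
        rw [map_mul, bev_C] at hQ
        have := mul_left_cancel₀ (aeval_ne_zero' hf (Polynomial.X_sub_C_ne_zero μ)) hQ
        rw [← this, ← bev_range]
        exact ⟨Q', rfl⟩
  rw [eq_top_iff]
  intro h _
  obtain ⟨s, hs, hm⟩ := hg h
  exact key _ s rfl hs h hm

lemma exists_step {k : Type*} [Field k] [IsAlgClosed k] {f g : MvPolynomial (Fin 2) k}
    (hf : Transcendental k f) (hg : GenBy k f g) (hne : Algebra.adjoin k {f, g} ≠ ⊤) :
    ∃ (l m : k) (g' : MvPolynomial (Fin 2) k),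
      g = Polynomial.aeval f (Polynomial.X - Polynomial.C l) * g' +
        Polynomial.aeval f (Polynomial.C m) := by
  obtain ⟨l, Q, hd, hn⟩ := exists_bad hf hg hne
  have hπ := prime_aeval hf hg (Polynomial.irreducible_X_sub_C l)
  set q := Q.map (Polynomial.evalRingHom l) with hq
  have hq0 : q ≠ 0 := by
    intro h0
    apply hn
    rw [Polynomial.C_dvd_iff_dvd_coeff]
    intro i
    rw [Polynomial.dvd_iff_isRoot]
    have := congrArg (fun p => Polynomial.coeff p i) h0
    simpa [hq] using this
  have hdiff : Polynomial.C (Polynomial.X - Polynomial.C l) ∣ Q - q.map Polynomial.C := by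
    rw [Polynomial.C_dvd_iff_dvd_coeff]
    intro i
    rw [Polynomial.dvd_iff_isRoot]
    simp [hq]
  have hbq : bev f g (q.map Polynomial.C) = Polynomial.aeval g q := by
    clear_value q
    clear hq hq0 hdiff
    induction q using Polynomial.induction_on' with
    | add p q hp hq => rw [Polynomial.map_add, map_add, map_add, hp, hq]
    | monomial n a => simp [bev, Polynomial.aeval_monomial]
  have hd2 : Polynomial.aeval f (Polynomial.X - Polynomial.C l) ∣ Polynomial.aeval g q := by
    obtain ⟨R, hR⟩ := hdiff
    have h2 : bev f g Q - bev f g (q.map Polynomial.C) =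
        Polynomial.aeval f (Polynomial.X - Polynomial.C l) * bev f g R := by
      rw [← map_sub, hR, map_mul, bev_C]
    rw [hbq] at h2
    have : Polynomial.aeval g q = bev f g Q -
        Polynomial.aeval f (Polynomial.X - Polynomial.C l) * bev f g R := by
      rw [← h2]; ring
    rw [this]
    exact dvd_sub hd (dvd_mul_right _ _)
  obtain ⟨m, g', hm⟩ := dvd_linear hπ _ q rfl hq0 hd2
  refine ⟨l, m, g', ?_⟩
  rw [← hm, Polynomial.aeval_C]; ring

lemma adjoin_pair_le {k A : Type*} [Field k] [CommRing A] [Algebra k A] {f g h : A}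
    (hg : g ∈ Algebra.adjoin k {f, h}) : Algebra.adjoin k {f, g} ≤ Algebra.adjoin k {f, h} := by
  rw [Algebra.adjoin_le_iff]
  rintro x (rfl | rfl)
  · exact Algebra.subset_adjoin (by simp)
  · exact hg

lemma main_alg_closed {k : Type*} [Field k] [IsAlgClosed k] {f : MvPolynomial (Fin 2) k}
    (hf : Transcendental k f) : ∀ (n : ℕ) (g : MvPolynomial (Fin 2) k), GenBy k f g →
      (jac f g).totalDegree = n → ∃ (a b : Polynomial k) (h : MvPolynomial (Fin 2) k),
      g = Polynomial.aeval f a * h + Polynomial.aeval f b ∧ Algebra.adjoin k {f, h} = ⊤ := by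
  intro n
  induction n using Nat.strong_induction_on with
  | _ n ih =>
  intro g hg hn
  by_cases htop : Algebra.adjoin k {f, g} = ⊤
  · exact ⟨1, 0, g, by simp, htop⟩
  obtain ⟨l, m, g', hg'⟩ := exists_step hf hg htop
  have hgen : GenBy k f g' := by
    intro h
    obtain ⟨s, hs, hm⟩ := hg h
    refine ⟨s, hs, adjoin_pair_le ?_ hm⟩
    rw [hg']
    exact add_mem (mul_mem (aeval_mem_adjoin_pair _ _ _) (Algebra.subset_adjoin (by simp)))
      (aeval_mem_adjoin_pair _ _ _)
  have hjac : jac f g = Polynomial.aeval f (Polynomial.X - Polynomial.C l) * jac f g' := by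
    rw [← jac_affine f g' _ (Polynomial.C m), ← hg']
  have hj0 : jac f g ≠ 0 := by
    obtain ⟨s, hs, h1⟩ := hg (X 0)
    obtain ⟨t, ht, h2⟩ := hg (X 1)
    exact ne_zero_of_dvd_ne_zero (aeval_ne_zero' hf (mul_ne_zero hs ht)) (jac_dvd s t h1 h2)
  have hlt : (jac f g').totalDegree < n := by
    have h1 := totalDegree_mul_of_isDomain (left_ne_zero_of_mul (hjac ▸ hj0))
      (right_ne_zero_of_mul (hjac ▸ hj0))
    rw [← hjac, hn] at h1
    have : (Polynomial.aeval f (Polynomial.X - Polynomial.C l)).totalDegree ≠ 0 := by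
      intro h0
      obtain ⟨c, hc⟩ := natDegree_eq_zero_of_totalDegree hf h0
      have := congrArg Polynomial.natDegree hc
      simp at this
    omega
  obtain ⟨a, b, h, hab, htop'⟩ := ih _ hlt g' hgen rfl
  refine ⟨(Polynomial.X - Polynomial.C l) * a, (Polynomial.X - Polynomial.C l) * b +
    Polynomial.C m, h, ?_, htop'⟩
  conv_lhs => rw [hg', hab]
  rw [map_mul, map_add, map_mul]
  ring

lemma exists_retraction (k K : Type*) [Field k] [Field K] [Algebra k K] :
    ∃ (π : K →ₗ[k] k) (ψ : MvPolynomial (Fin 2) K → MvPolynomial (Fin 2) k),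
      π 1 = 1 ∧ (∀ a b, ψ (a + b) = ψ a + ψ b) ∧
      (∀ (a : MvPolynomial (Fin 2) k) b, ψ (map (algebraMap k K) a * b) = a * ψ b) ∧
      (∀ c, ψ (C c) = C (π c)) := by
  obtain ⟨π, hπ⟩ := LinearMap.exists_leftInverse_of_injective (Algebra.linearMap k K)
    (LinearMap.ker_eq_bot.mpr (algebraMap k K).injective)
  have h1 : ∀ c, π (algebraMap k K c) = c := fun c => LinearMap.congr_fun hπ c
  let ψ : MvPolynomial (Fin 2) K → MvPolynomial (Fin 2) k := fun p =>
    ∑ m ∈ p.support, monomial m (π (coeff m p))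
  have hψ : ∀ p m, coeff m (ψ p) = π (coeff m p) := by
    intro p m
    classical
    simp only [ψ, coeff_sum, coeff_monomial]
    rw [Finset.sum_ite_eq']
    split_ifs with h
    · rfl
    · rw [notMem_support_iff.mp h, map_zero]
  refine ⟨π, ψ, by simpa using h1 1, ?_, ?_, ?_⟩
  · intro a b
    ext m
    simp [hψ]
  · intro a b
    ext m
    classical
    rw [hψ, coeff_mul, coeff_mul, map_sum]
    refine Finset.sum_congr rfl fun x _ => ?_
    rw [hψ, coeff_map, ← Algebra.smul_def, map_smul, smul_eq_mul]
  · intro c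
    ext m
    classical
    rw [hψ, coeff_C, coeff_C]
    split_ifs <;> simp

lemma retraction_mem {k K : Type*} [Field k] [Field K] [Algebra k K]
    {ψ : MvPolynomial (Fin 2) K → MvPolynomial (Fin 2) k} {π : K →ₗ[k] k}
    (hadd : ∀ a b, ψ (a + b) = ψ a + ψ b)
    (hmul : ∀ (a : MvPolynomial (Fin 2) k) b, ψ (map (algebraMap k K) a * b) = a * ψ b)
    (hC : ∀ c, ψ (C c) = C (π c)) (S : Set (MvPolynomial (Fin 2) k)) {q}
    (hq : q ∈ Algebra.adjoin K ((map (algebraMap k K) : _ → MvPolynomial (Fin 2) K) '' S)) :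
    ψ q ∈ Algebra.adjoin k S := by
  have h0 : ψ 0 = 0 := by simpa using hC 0
  rw [← Subalgebra.mem_toSubmodule, Algebra.adjoin_eq_span] at hq
  have key : ∀ m ∈ Submonoid.closure ((map (algebraMap k K) : _ → MvPolynomial (Fin 2) K) '' S),
      ∃ m' ∈ Algebra.adjoin k S, m = map (algebraMap k K) m' := by
    intro m hm
    induction hm using Submonoid.closure_induction with
    | mem x hx =>
      obtain ⟨y, hy, rfl⟩ := hx
      exact ⟨y, Algebra.subset_adjoin hy, rfl⟩
    | one => exact ⟨1, one_mem _, by simp⟩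
    | mul x y _ _ hx hy =>
      obtain ⟨x', hx', rfl⟩ := hx
      obtain ⟨y', hy', rfl⟩ := hy
      exact ⟨x' * y', mul_mem hx' hy', by simp⟩
  have key2 : ∀ m ∈ Submonoid.closure ((map (algebraMap k K) : _ → MvPolynomial (Fin 2) K) '' S),
      ∀ c : K, ψ (c • m) ∈ Algebra.adjoin k S := by
    intro m hm c
    obtain ⟨m', hm', rfl⟩ := key m hm
    rw [MvPolynomial.smul_eq_C_mul, mul_comm, hmul, hC]
    exact mul_mem hm' (Subalgebra.algebraMap_mem _ (π c))
  induction hq using Submodule.closure_induction with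
  | zero => rw [h0]; exact zero_mem _
  | add x y _ _ hx hy => rw [hadd]; exact add_mem hx hy
  | smul_mem c x hx => exact key2 x hx c

lemma map_mem_adjoin {k K : Type*} [Field k] [Field K] [Algebra k K]
    (S : Set (MvPolynomial (Fin 2) k)) {q} (hq : q ∈ Algebra.adjoin k S) :
    map (algebraMap k K) q ∈
      Algebra.adjoin K ((map (algebraMap k K) : _ → MvPolynomial (Fin 2) K) '' S) := by
  induction hq using Algebra.adjoin_induction with
  | mem x hx => exact Algebra.subset_adjoin ⟨x, hx, rfl⟩
  | algebraMap r =>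
    rw [MvPolynomial.algebraMap_eq, map_C]
    exact Subalgebra.algebraMap_mem _ (algebraMap k K r)
  | add x y _ _ hx hy => rw [map_add]; exact add_mem hx hy
  | mul x y _ _ hx hy => rw [map_mul]; exact mul_mem hx hy

lemma map_aeval_poly {k K : Type*} [Field k] [Field K] [Algebra k K]
    (f : MvPolynomial (Fin 2) k) (s : Polynomial k) :
    map (algebraMap k K) (Polynomial.aeval f s) =
      Polynomial.aeval (map (algebraMap k K) f) (s.map (algebraMap k K)) := by
  induction s using Polynomial.induction_on' with
  | add p q hp hq => simp only [map_add, Polynomial.map_add, hp, hq]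
  | monomial n a => simp [Polynomial.aeval_monomial, MvPolynomial.algebraMap_eq]

lemma exists_mate {k : Type*} [Field k] {f g : MvPolynomial (Fin 2) k}
    (hf : f.totalDegree ≠ 0) (hg : GenBy k f g) : ∃ h, Algebra.adjoin k {f, h} = ⊤ := by
  let K := AlgebraicClosure k
  let j : MvPolynomial (Fin 2) k →+* MvPolynomial (Fin 2) K := map (algebraMap k K)
  have hjinj : Function.Injective j := map_injective _ (algebraMap k K).injective
  have himg : ∀ a b : MvPolynomial (Fin 2) k, j '' {a, b} = {j a, j b} := fun a b => by
    simp [Set.image_pair]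
  have hfK : Transcendental K (j f) := by
    apply transcendental_of_nonconst
    intro h0
    apply hf
    rw [totalDegree_eq_zero_iff] at h0 ⊢
    intro m hm
    refine h0 m ?_
    rw [mem_support_iff] at hm ⊢
    simpa [j, coeff_map] using hm
  have hgK : GenBy K (j f) (j g) := by
    apply genBy_of_XY
    intro i
    obtain ⟨s, hs, hm⟩ := hg (X i)
    refine ⟨s.map (algebraMap k K), by simpa using hs, ?_⟩
    have := map_mem_adjoin (K := K) _ hm
    rw [map_mul, map_aeval_poly, map_X] at this
    rw [← himg]
    exact this
  obtain ⟨a, b, h, hab, htop⟩ := main_alg_closed hfK _ (j g) hgK rfl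
  have hgen : GenBy K (j f) h := fun x => ⟨1, one_ne_zero, by rw [htop]; trivial⟩
  have hun : IsUnit (jac (j f) h) := by
    have := jac_dvd (f := j f) (g := h) 1 1 (by rw [htop]; trivial) (by rw [htop]; trivial)
    rw [one_mul, map_one] at this
    exact isUnit_of_dvd_one this
  obtain ⟨c, hc, hjc⟩ := isUnit_iff_eq_C_of_isReduced.mp hun
  have hJ : j (jac f g) = Polynomial.aeval (j f) a * C c := by
    rw [← hjc, ← jac_affine _ _ a b, ← hab]
    simp [jac, j, pderiv_map]
  have hc0 : c ≠ 0 := hc.ne_zero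
  have hcc : (C c * C c⁻¹ : MvPolynomial (Fin 2) K) = 1 := by
    rw [← C_mul, mul_inv_cancel₀ hc0, C_1]
  obtain ⟨π, ψ, hπ1, hadd, hmul, hC⟩ := exists_retraction k K
  have hψj : ∀ x, ψ (j x) = x := by
    intro x
    have h1 := hmul x 1
    have h2 := hC 1
    rw [C_1, hπ1, C_1] at h2
    rwa [h2, mul_one, mul_one] at h1
  have e1 : j g = j (jac f g) * (C c⁻¹ * h) + Polynomial.aeval (j f) b := by
    rw [hJ, hab]
    linear_combination (-Polynomial.aeval (j f) a * h) * hcc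
  set G := ψ (C c⁻¹ * h) with hG
  have e2 : g = jac f g * G + ψ (Polynomial.aeval (j f) b) := by
    conv_lhs => rw [← hψj g, e1, hadd]
    rw [hmul]
  have hb : ψ (Polynomial.aeval (j f) b) ∈ Algebra.adjoin k {f} := by
    apply retraction_mem hadd hmul hC
    rw [Set.image_singleton]
    exact Polynomial.aeval_mem_adjoin_singleton _ _
  rw [Algebra.adjoin_singleton_eq_range_aeval] at hb
  obtain ⟨b', hb'⟩ := hb
  change Polynomial.aeval f b' = _ at hb'
  rw [← hb'] at e2
  have e3 := congrArg j e2
  have e4 : j (Polynomial.aeval f b') = Polynomial.aeval (j f) (b'.map (algebraMap k K)) :=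
    map_aeval_poly f b'
  rw [map_add, map_mul, e4, hJ] at e3
  have e5 : Polynomial.aeval (j f) a * (h - C c * j G) =
      Polynomial.aeval (j f) (b'.map (algebraMap k K) - b) := by
    rw [map_sub]
    linear_combination e3 - hab
  have hinj := bev_injective hfK hgen
  have hx : (h - C c * j G) ∈ (bev (k := K) (j f) h).range := by
    rw [bev_range, htop]; trivial
  obtain ⟨H, hH⟩ := hx
  change bev (j f) h H = _ at hH
  have e6 : Polynomial.C a * H = Polynomial.C (b'.map (algebraMap k K) - b) := by
    apply hinj
    rw [map_mul, bev_C, bev_C, hH, e5]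
  have e7 : a * H.coeff 0 = b'.map (algebraMap k K) - b := by
    have := congrArg (fun p => Polynomial.coeff p 0) e6
    simpa using this
  have ha : a ≠ 0 := by
    rintro rfl
    have hj0 : jac (j f) (j g) ≠ 0 := by
      obtain ⟨s, hs, h1⟩ := hgK (X 0)
      obtain ⟨t, ht, h2⟩ := hgK (X 1)
      exact ne_zero_of_dvd_ne_zero (aeval_ne_zero' hfK (mul_ne_zero hs ht)) (jac_dvd s t h1 h2)
    apply hj0
    rw [hab, jac_affine]; simp
  have e8 : h - C c * j G = Polynomial.aeval (j f) (H.coeff 0) := by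
    apply mul_left_cancel₀ (aeval_ne_zero' hfK ha)
    rw [e5, ← e7, map_mul]
  have hhmem : h ∈ Algebra.adjoin K {j f, j G} := by
    have : h = c • j G + Polynomial.aeval (j f) (H.coeff 0) := by
      rw [← e8, MvPolynomial.smul_eq_C_mul]; ring
    rw [this]
    exact add_mem (Subalgebra.smul_mem _ (Algebra.subset_adjoin (by simp)) c)
      (aeval_mem_adjoin_pair _ _ _)
  have htop2 : Algebra.adjoin K {j f, j G} = ⊤ := by
    rw [eq_top_iff, ← htop]
    exact adjoin_pair_le hhmem
  refine ⟨G, ?_⟩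
  rw [eq_top_iff]
  intro x _
  rw [← hψj x]
  apply retraction_mem hadd hmul hC
  change j x ∈ Algebra.adjoin K (j '' {f, G})
  rw [himg, htop2]
  trivial

lemma exists_equiv {k : Type*} [Field k] {f h : MvPolynomial (Fin 2) k}
    (hf : f.totalDegree ≠ 0) (htop : Algebra.adjoin k {f, h} = ⊤) :
    ∃ e : MvPolynomial (Fin 2) k ≃ₐ[k] MvPolynomial (Fin 2) k, e f = X 0 := by
  have hinj := bev_injective (transcendental_of_nonconst hf)
    (fun x => ⟨1, one_ne_zero, by rw [htop]; trivial⟩ : GenBy k f h)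
  have hsurj : Function.Surjective (bev (k := k) f h) := by
    rw [← AlgHom.range_eq_top, bev_range, htop]
  let e1 := AlgEquiv.ofBijective _ ⟨hinj, hsurj⟩
  refine ⟨e1.symm.trans (Polynomial.Bivariate.equivMvPolynomial k), ?_⟩
  have : e1 (Polynomial.C Polynomial.X) = f := by
    change bev f h (Polynomial.C Polynomial.X) = f
    simp [bev]
  rw [AlgEquiv.trans_apply, ← this, AlgEquiv.symm_apply_apply]
  simp

lemma fibre_of_variable {k R : Type*} [Field k] [CommRing R] [Algebra k R] (t : R)
    (P : MvPolynomial (Fin 2) k) (φ : MvPolynomial (Fin 2) k ≃ₐ[k] MvPolynomial (Fin 2) k)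
    (hφ : φ P = X 0) :
    Nonempty ((MvPolynomial (Fin 2) R ⧸ Ideal.span {map (algebraMap k R) P - C t}) ≃ₐ[R]
      Polynomial R) := by
  let σ : MvPolynomial (Fin 2) k →ₐ[k] Polynomial R := aeval ![Polynomial.C t, Polynomial.X]
  let F : MvPolynomial (Fin 2) R →ₐ[R] Polynomial R := aeval (fun i => σ (φ (X i)))
  have hF : ∀ p : MvPolynomial (Fin 2) k, F (map (algebraMap k R) p) = σ (φ p) := by
    intro p
    induction p using MvPolynomial.induction_on with
    | C a =>
      rw [map_C, ← MvPolynomial.algebraMap_eq, ← MvPolynomial.algebraMap_eq, AlgHom.commutes,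
        AlgEquiv.commutes, AlgHom.commutes]
      exact (IsScalarTower.algebraMap_apply k R (Polynomial R) a).symm
    | add p q hp hq => simp only [map_add, hp, hq]
    | mul_X p i hp =>
      simp only [map_mul, hp, map_X]
      simp [F]
  let I : Ideal (MvPolynomial (Fin 2) R) := Ideal.span {map (algebraMap k R) P - C t}
  let F' : (MvPolynomial (Fin 2) R ⧸ I) →ₐ[R] Polynomial R :=
    Ideal.Quotient.liftₐ I F (by
      intro a ha
      have : I ≤ RingHom.ker F := by
        rw [Ideal.span_le, Set.singleton_subset_iff]
        change F _ = 0
        rw [map_sub, hF, hφ]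
        simp [σ, F]
      exact this ha)
  let inv : Polynomial R →ₐ[R] (MvPolynomial (Fin 2) R ⧸ I) :=
    Polynomial.aeval (Ideal.Quotient.mk I (map (algebraMap k R) (φ.symm (X 1))))
  have hinv : ∀ p, inv (σ p) = Ideal.Quotient.mk I (map (algebraMap k R) (φ.symm p)) := by
    intro p
    induction p using MvPolynomial.induction_on with
    | C a =>
      have h1 : σ (C a) = algebraMap R (Polynomial R) (algebraMap k R a) := by
        simp [σ, IsScalarTower.algebraMap_apply k R (Polynomial R)]
      have h2 : φ.symm (C a) = C a := by
        rw [← MvPolynomial.algebraMap_eq, AlgEquiv.commutes]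
      rw [h1, h2, AlgHom.commutes, map_C]
      rfl
    | add p q hp hq => simp only [map_add, hp, hq]
    | mul_X p i hp =>
      simp only [map_mul, hp]
      congr 1
      fin_cases i
      · have h1 : φ.symm (X 0) = P := by rw [← hφ, AlgEquiv.symm_apply_apply]
        have h2 : inv (σ (X 0)) = algebraMap R _ t := by
          have : σ (X 0) = algebraMap R (Polynomial R) t := by simp [σ]
          rw [this, AlgHom.commutes]
        change inv (σ (X 0)) = Ideal.Quotient.mk I (map _ (φ.symm (X 0)))
        rw [h1, h2]
        change Ideal.Quotient.mk I (C t) = _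
        rw [eq_comm, Ideal.Quotient.eq]
        exact Ideal.subset_span rfl
      · simp [σ, inv]
  refine ⟨AlgEquiv.ofAlgHom F' inv ?_ ?_⟩
  · apply Polynomial.algHom_ext
    simp only [AlgHom.comp_apply, inv, Polynomial.aeval_X, AlgHom.id_apply]
    change F _ = _
    rw [hF]
    simp [σ]
  · apply Ideal.Quotient.algHom_ext
    apply MvPolynomial.algHom_ext
    intro i
    change inv (F (X i)) = Ideal.Quotient.mk I (X i)
    have : F (X i) = σ (φ (X i)) := by simp [F]
    rw [this, hinv]
    simp

lemma nonconst_of_fibre {k R : Type*} [Field k] [CommRing R] [Algebra k R] (t : R)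
    (ht : ∀ c, algebraMap k R c ≠ t) (P : MvPolynomial (Fin 2) k)
    (e : (MvPolynomial (Fin 2) R ⧸ Ideal.span {map (algebraMap k R) P - C t}) ≃ₐ[R]
      Polynomial R) : P.totalDegree ≠ 0 := by
  intro h
  rw [totalDegree_eq_zero_iff_eq_C] at h
  set c := coeff 0 P
  apply ht c
  have h1 : algebraMap R (MvPolynomial (Fin 2) R ⧸ Ideal.span {map (algebraMap k R) P - C t})
      (algebraMap k R c - t) = 0 := by
    change Ideal.Quotient.mk _ (C _) = 0
    rw [Ideal.Quotient.eq_zero_iff_mem]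
    apply Ideal.subset_span
    rw [h, map_C, C_sub]
    rfl
  have h2 := congrArg e h1
  rw [AlgEquiv.commutes, map_zero, Polynomial.algebraMap_eq, Polynomial.C_eq_zero] at h2
  exact sub_eq_zero.mp h2

/-- The induced map on the fibre, transported to the polynomial ring. -/
lemma exists_eps {k R L : Type*} [Field k] [CommRing R] [Algebra k R] [CommRing L] [Algebra k L]
    (t : R) (P : MvPolynomial (Fin 2) k)
    (e : (MvPolynomial (Fin 2) R ⧸ Ideal.span {map (algebraMap k R) P - C t}) ≃ₐ[R]
      Polynomial R) (ρ : R →ₐ[k] L) (ι : MvPolynomial (Fin 2) k →ₐ[k] L) (hρ : ρ t = ι P) :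
    ∃ ε : Polynomial R →+* L, (∀ c, ε (Polynomial.C c) = ρ c) ∧
      (∀ x, ∃ q, ε q = ι x) ∧
      (∀ q, ∃ Z : MvPolynomial (Fin 2) R, ε q = eval₂Hom (ρ : R →+* L) (fun i => ι (X i)) Z) := by
  let I : Ideal (MvPolynomial (Fin 2) R) := Ideal.span {map (algebraMap k R) P - C t}
  let Φ : MvPolynomial (Fin 2) R →+* L := eval₂Hom (ρ : R →+* L) (fun i => ι (X i))
  have hΦ : ∀ p, Φ (map (algebraMap k R) p) = ι p := by
    intro p
    induction p using MvPolynomial.induction_on with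
    | C a =>
      rw [map_C]
      have : ι (C a) = algebraMap k L a := ι.commutes a
      simp [Φ, this]
    | add p q hp hq => simp only [map_add, hp, hq]
    | mul_X p i hp =>
      simp only [map_mul, hp, map_X]
      simp [Φ]
  let Φ' : (MvPolynomial (Fin 2) R ⧸ I) →+* L := Ideal.Quotient.lift I Φ (by
      intro a ha
      have : I ≤ RingHom.ker Φ := by
        rw [Ideal.span_le, Set.singleton_subset_iff]
        change Φ _ = 0
        rw [map_sub, hΦ]
        simp [Φ, hρ]
      exact this ha)
  have hΦ' : ∀ Z, Φ' (Ideal.Quotient.mk I Z) = Φ Z := fun Z => Ideal.Quotient.lift_mk _ _ _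
  refine ⟨Φ'.comp (e.symm : Polynomial R →+* _), ?_, ?_, ?_⟩
  · intro c
    have : e.symm (Polynomial.C c) = Ideal.Quotient.mk I (C c) := e.symm.commutes c
    change Φ' (e.symm (Polynomial.C c)) = _
    rw [this, hΦ']
    simp [Φ]
  · intro x
    refine ⟨e (Ideal.Quotient.mk I (map (algebraMap k R) x)), ?_⟩
    change Φ' (e.symm _) = _
    rw [AlgEquiv.symm_apply_apply, hΦ', hΦ]
  · intro q
    obtain ⟨Z, hZ⟩ := Ideal.Quotient.mk_surjective (e.symm q)
    refine ⟨Z, ?_⟩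
    change Φ' (e.symm q) = Φ Z
    rw [← hZ, hΦ']

lemma mate_of_fibre_poly {k : Type*} [Field k] (P : MvPolynomial (Fin 2) k)
    (e : (MvPolynomial (Fin 2) (Polynomial k) ⧸
        Ideal.span {map (algebraMap k (Polynomial k)) P - C Polynomial.X}) ≃ₐ[Polynomial k]
      Polynomial (Polynomial k)) : ∃ h, Algebra.adjoin k {P, h} = ⊤ := by
  obtain ⟨ε, h1, h2, -⟩ := exists_eps Polynomial.X P e (Polynomial.aeval P) (AlgHom.id k _)
    (by simp)
  refine ⟨ε Polynomial.X, ?_⟩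
  rw [eq_top_iff]
  intro x _
  obtain ⟨q, hq⟩ := h2 x
  change ε q = x at hq
  rw [← hq]
  clear hq
  induction q using Polynomial.induction_on' with
  | add p q hp hq => rw [map_add]; exact add_mem hp hq
  | monomial n a =>
    rw [← Polynomial.C_mul_X_pow_eq_monomial, map_mul, map_pow, h1]
    exact mul_mem (aeval_mem_adjoin_pair _ _ _) (pow_mem (Algebra.subset_adjoin (by simp)) _)

lemma gen_of_fibre_ratFunc {k : Type*} [Field k] (P : MvPolynomial (Fin 2) k)
    (hP : Transcendental k P)
    (e : (MvPolynomial (Fin 2) (RatFunc k) ⧸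
        Ideal.span {map (algebraMap k (RatFunc k)) P -
          C (algebraMap (Polynomial k) (RatFunc k) Polynomial.X)}) ≃ₐ[RatFunc k]
      Polynomial (RatFunc k)) : ∃ g, GenBy k P g := by
  let A := MvPolynomial (Fin 2) k
  let L := FractionRing A
  let ι : A →ₐ[k] L := IsScalarTower.toAlgHom k A L
  have hι : Function.Injective ι := IsFractionRing.injective A L
  have hιP : ∀ s : Polynomial k, Polynomial.aeval (ι P) s = ι (Polynomial.aeval P s) := fun s =>
    Polynomial.aeval_algHom_apply ι P s
  let ρ0 : Polynomial k →ₐ[k] L := Polynomial.aeval (ι P)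
  have hρ0 : Function.Injective ρ0 := by
    rw [injective_iff_map_eq_zero]
    intro s hs
    have : ι (Polynomial.aeval P s) = 0 := by rw [← hιP]; exact hs
    exact transcendental_iff.mp hP s (hι (by rw [this, map_zero]))
  let ρ : RatFunc k →ₐ[k] L := IsFractionRing.liftAlgHom (K := RatFunc k) (g := ρ0) hρ0
  have hρ : ∀ p, ρ (algebraMap (Polynomial k) (RatFunc k) p) = Polynomial.aeval (ι P) p := fun p =>
    IsFractionRing.lift_algebraMap hρ0 p
  obtain ⟨ε, h1, h2, h3⟩ := exists_eps _ P e ρ ι (by rw [hρ, Polynomial.aeval_X])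
  have hρmem : ∀ (B : Subalgebra k L) (hB : ι P ∈ B) c, ρ c ∈ locSub (ι P) B hB := by
    intro B hB c
    obtain ⟨p, q, hq, hpq⟩ := IsFractionRing.div_surjective (A := Polynomial k) c
    have hq0 : q ≠ 0 := nonZeroDivisors.ne_zero hq
    refine ⟨q, hq0, ?_⟩
    have hqq : Polynomial.aeval (ι P) q ≠ 0 := fun h => hq0 (hρ0 (by rw [map_zero]; exact h))
    rw [← hpq, map_div₀, hρ, hρ, mul_div_cancel₀ _ hqq]
    exact Algebra.adjoin_le (S := B) (by simp [hB])
      (Polynomial.aeval_mem_adjoin_singleton k (ι P) (p := p))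
  have hιr : ∀ x, ι x ∈ ι.range := fun x => ⟨x, rfl⟩
  have hz : ε Polynomial.X ∈ locSub (ι P) ι.range (hιr P) := by
    obtain ⟨Z, hZ⟩ := h3 Polynomial.X
    rw [hZ]
    clear hZ
    induction Z using MvPolynomial.induction_on with
    | C a =>
      rw [coe_eval₂Hom, eval₂_C]
      exact hρmem _ (hιr P) a
    | add p q hp hq => rw [map_add]; exact add_mem hp hq
    | mul_X p i hp =>
      rw [map_mul]
      refine mul_mem hp ?_
      rw [coe_eval₂Hom, eval₂_X]
      exact ⟨1, one_ne_zero, by rw [map_one, one_mul]; exact hιr _⟩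
  obtain ⟨s, hs, G, hG⟩ := hz
  change ι G = _ at hG
  refine ⟨G, fun x => ?_⟩
  have hPm : ι P ∈ Algebra.adjoin k {ι P, ι G} := Algebra.subset_adjoin (by simp)
  have hx : ι x ∈ locSub (ι P) _ hPm := by
    obtain ⟨q, hq⟩ := h2 x
    rw [← hq]
    clear hq
    induction q using Polynomial.induction_on' with
    | add p q hp hq => rw [map_add]; exact add_mem hp hq
    | monomial n a =>
      rw [← Polynomial.C_mul_X_pow_eq_monomial, map_mul, map_pow, h1]
      have hX : ε Polynomial.X ∈ locSub (ι P) _ hPm := by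
        refine ⟨s, hs, ?_⟩
        rw [← hG]
        exact Algebra.subset_adjoin (by simp)
      exact mul_mem (hρmem _ hPm a) (pow_mem hX _)
  obtain ⟨u, hu, hm⟩ := hx
  refine ⟨u, hu, ?_⟩
  have hmap : Algebra.adjoin k {ι P, ι G} = (Algebra.adjoin k {P, G}).map ι := by
    rw [AlgHom.map_adjoin, Set.image_pair]
  rw [hmap, hιP, ← map_mul] at hm
  obtain ⟨y, hy, hyx⟩ := hm
  rw [← hι hyx]
  exact hy

/-- **Lemma 3.9 (parts (1)–(3)) (Blanc–van Santen).** For `P ∈ k[x,y]`, the following are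
equivalent: (1) `P` is a variable of `k[x,y]`; (2) the `k[t]`-algebra `k[t][x,y]/(P − t)` is
a polynomial ring in one variable over `k[t]`; (3) the `k(t)`-algebra `k(t)[x,y]/(P − t)` is
a polynomial ring in one variable over `k(t)`. -/
theorem variable_iff_generic_fibre_polynomial_ring
    (k : Type*) [Field k] (P : MvPolynomial (Fin 2) k) :
    ((∃ f : MvPolynomial (Fin 2) k ≃ₐ[k] MvPolynomial (Fin 2) k, f P = X 0) ↔
      Nonempty ((MvPolynomial (Fin 2) (Polynomial k) ⧸
          Ideal.span {MvPolynomial.map (Polynomial.C : k →+* Polynomial k) P -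
            MvPolynomial.C Polynomial.X}) ≃ₐ[Polynomial k] Polynomial (Polynomial k))) ∧
    ((∃ f : MvPolynomial (Fin 2) k ≃ₐ[k] MvPolynomial (Fin 2) k, f P = X 0) ↔
      Nonempty ((MvPolynomial (Fin 2) (RatFunc k) ⧸
          Ideal.span {MvPolynomial.map
              ((algebraMap (Polynomial k) (RatFunc k)).comp (Polynomial.C : k →+* Polynomial k)) P -
            MvPolynomial.C (algebraMap (Polynomial k) (RatFunc k) Polynomial.X)})
          ≃ₐ[RatFunc k] Polynomial (RatFunc k))) := by
  have hC : (Polynomial.C : k →+* Polynomial k) = algebraMap k (Polynomial k) := rfl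
  have hR : (algebraMap (Polynomial k) (RatFunc k)).comp (algebraMap k (Polynomial k)) =
      algebraMap k (RatFunc k) := (IsScalarTower.algebraMap_eq k (Polynomial k) (RatFunc k)).symm
  have hne : ∀ c : k, algebraMap k (Polynomial k) c ≠ Polynomial.X := by
    intro c h
    have := congrArg Polynomial.natDegree h
    simp [Polynomial.algebraMap_eq] at this
  rw [hC, hR]
  refine ⟨⟨?_, ?_⟩, ⟨?_, ?_⟩⟩
  · rintro ⟨φ, hφ⟩
    exact fibre_of_variable _ P φ hφ
  · rintro ⟨e⟩
    obtain ⟨h, hh⟩ := mate_of_fibre_poly P e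
    exact exists_equiv (nonconst_of_fibre _ hne P e) hh
  · rintro ⟨φ, hφ⟩
    exact fibre_of_variable _ P φ hφ
  · rintro ⟨e⟩
    have hd : P.totalDegree ≠ 0 := by
      refine nonconst_of_fibre _ (fun c h => hne c ?_) P e
      apply IsFractionRing.injective (Polynomial k) (RatFunc k)
      rw [← h, ← IsScalarTower.algebraMap_apply]
    obtain ⟨g, hg⟩ := gen_of_fibre_ratFunc P (transcendental_of_nonconst hd) e
    obtain ⟨h, hh⟩ := exists_mate hd hg
    exact exists_equiv hd hh
end
end

section
/- Let k be a field of characteristic p > 0, let a ∈ k, b ∈ k*, and let q ≥ 0 be an integer. Then the k-subalgebra of k[u] generated by u^{p²} and (1/b)(a·u^{pq} + u) equals k[u] (so the morphism 𝔸¹ → 𝔸², u ↦ (u^{p²}, (1/b)(a·u^{pq} + u)), is a closed embedding), and the kernel of the k-algebra homomorphism k[x,y] → k[u] given by x ↦ u^{p²}, y ↦ (1/b)(a·u^{pq} + u) is the principal ideal generated by x + a^{p²}·x^{pq} − b^{p²}·y^{p²} (so the image of the embedding is the closed curve in 𝔸² defined by this polynomial). -/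
open MvPolynomial

noncomputable section

/-- **Lemma 3.11 (Blanc–van Santen).** Let `k` be a field of characteristic `p > 0`,
`a ∈ k`, `b ∈ k*`, `q ≥ 0`. Then `u ↦ (u^{p²}, (1/b)(a·u^{pq} + u))` is a closed embedding
`𝔸¹ ↪ 𝔸²`: the subalgebra of `k[u]` generated by the two components is all of `k[u]`, and
the kernel of the corresponding map `k[x,y] → k[u]` is generated by
`x + a^{p²}·x^{pq} − b^{p²}·y^{p²}`. -/
theorem charP_embedding_line_in_plane
    (k : Type*) [Field k] (p : ℕ) [CharP k p] (hp : 0 < p)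
    (a : k) (b : k) (hb : b ≠ 0) (q : ℕ) :
    Algebra.adjoin k
        {(Polynomial.X : Polynomial k) ^ p ^ 2,
         Polynomial.C b⁻¹ * (Polynomial.C a * Polynomial.X ^ (p * q) + Polynomial.X)} =
      (⊤ : Subalgebra k (Polynomial k)) ∧
    RingHom.ker (aeval
        ![(Polynomial.X : Polynomial k) ^ p ^ 2,
          Polynomial.C b⁻¹ * (Polynomial.C a * Polynomial.X ^ (p * q) + Polynomial.X)] :
        MvPolynomial (Fin 2) k →ₐ[k] Polynomial k) =
      Ideal.span {X 0 + C (a ^ p ^ 2) * X 0 ^ (p * q) - C (b ^ p ^ 2) * X 1 ^ p ^ 2} := by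
  have hpp : p.Prime := (CharP.char_is_prime_or_zero k p).resolve_right hp.ne'
  haveI : Fact p.Prime := ⟨hpp⟩
  have hbC : (Polynomial.C b : Polynomial k) * Polynomial.C b⁻¹ = 1 := by
    rw [← Polynomial.C_mul, mul_inv_cancel₀ hb, Polynomial.C_1]
  have hbM : (C b⁻¹ : MvPolynomial (Fin 2) k) * C b = 1 := by
    rw [← C_mul, inv_mul_cancel₀ hb, C_1]
  set x : Polynomial k := Polynomial.X ^ p ^ 2 with hx
  set y : Polynomial k :=
    Polynomial.C b⁻¹ * (Polynomial.C a * Polynomial.X ^ (p * q) + Polynomial.X) with hy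
  have hby : Polynomial.C b * y = Polynomial.C a * Polynomial.X ^ (p * q) + Polynomial.X := by
    rw [hy, ← mul_assoc, hbC, one_mul]
  -- the key identity for `u ^ p`
  have hup : (Polynomial.X : Polynomial k) ^ p
      = Polynomial.C (b ^ p) * y ^ p - Polynomial.C (a ^ p) * x ^ q := by
    have h := congrArg (fun t => t ^ p) hby
    simp only [add_pow_char, mul_pow] at h
    rw [Polynomial.C_pow, Polynomial.C_pow, h, hx]
    ring
  have hu : (Polynomial.X : Polynomial k)
      = Polynomial.C b * y - Polynomial.C a * (Polynomial.X ^ p) ^ q := by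
    rw [hby]; ring
  constructor
  · rw [eq_top_iff, ← Polynomial.adjoin_X]
    apply Algebra.adjoin_le
    rw [Set.singleton_subset_iff]
    set S := Algebra.adjoin k {x, y}
    have hxS : x ∈ S := Algebra.subset_adjoin (by simp)
    have hyS : y ∈ S := Algebra.subset_adjoin (by simp)
    have hC : ∀ c : k, Polynomial.C c ∈ S := fun c => S.algebraMap_mem c
    have hpS : (Polynomial.X : Polynomial k) ^ p ∈ S := by
      rw [hup]
      exact S.sub_mem (S.mul_mem (hC _) (S.pow_mem hyS _)) (S.mul_mem (hC _) (S.pow_mem hxS _))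
    change (Polynomial.X : Polynomial k) ∈ S
    rw [hu]
    exact S.sub_mem (S.mul_mem (hC _) hyS) (S.mul_mem (hC _) (S.pow_mem hpS _))
  · set f : MvPolynomial (Fin 2) k :=
      X 0 + C (a ^ p ^ 2) * X 0 ^ (p * q) - C (b ^ p ^ 2) * X 1 ^ p ^ 2 with hf
    apply le_antisymm
    · intro g hg
      rw [RingHom.mem_ker] at hg
      let W : MvPolynomial (Fin 2) k := C (b ^ p) * X 1 ^ p - C (a ^ p) * X 0 ^ q
      let U : MvPolynomial (Fin 2) k := C b * X 1 - C a * W ^ q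
      have hW : W ^ p = X 0 - f := by
        simp only [W, hf, sub_pow_char, mul_pow, C_pow]
        ring
      have hU : U ^ p = C (b ^ p) * X 1 ^ p - C (a ^ p) * (W ^ p) ^ q := by
        simp only [U, sub_pow_char, mul_pow, C_pow]
        ring
      let π := Ideal.Quotient.mkₐ k (Ideal.span {f})
      have hπf : π f = 0 := by
        exact Ideal.Quotient.eq_zero_iff_mem.mpr (Ideal.mem_span_singleton_self f)
      have h1 : π (W ^ p) = π (X 0) := by rw [hW, map_sub, hπf, sub_zero]
      have h2 : π (U ^ p) = π W := by
        rw [hU, map_sub, map_mul, map_mul, map_pow _ (W ^ p), h1]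
        simp only [W, map_sub, map_mul, map_pow]
      have h3 : π (U ^ p ^ 2) = π (X 0) := by
        rw [pow_two, pow_mul, map_pow, h2, ← map_pow, h1]
      have h4 : π (C b⁻¹ * (C a * U ^ (p * q) + U)) = π (X 1) := by
        have : π (C a * U ^ (p * q) + U) = π (C b * X 1) := by
          rw [map_add, map_mul, pow_mul, map_pow _ (U ^ p), h2, ← map_pow, ← map_mul,
            ← map_add]
          congr 1
          simp only [U]
          ring
        rw [map_mul, this, ← map_mul, ← mul_assoc, hbM, one_mul]
      have key : (π.comp (Polynomial.aeval U)).comp (aeval ![x, y]) = π := by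
        apply MvPolynomial.algHom_ext
        intro i
        fin_cases i
        · simpa [hx] using h3
        · simpa [hy, MvPolynomial.algebraMap_eq] using h4
      have h5 : π g = 0 := by
        rw [← key]
        simp only [AlgHom.comp_apply]
        rw [hg, map_zero, map_zero]
      exact Ideal.Quotient.eq_zero_iff_mem.mp h5
    · rw [Ideal.span_singleton_le_iff_mem, RingHom.mem_ker]
      have h := congrArg (fun t => t ^ p) hup
      simp only [sub_pow_char, mul_pow] at h
      have hxp : x = (Polynomial.X ^ p) ^ p := by rw [hx]; ring
      simp only [hf, map_sub, map_add, map_mul, map_pow, aeval_X, algHom_C,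
        Polynomial.algebraMap_eq, Matrix.cons_val_zero, Matrix.cons_val_one]
      rw [← hxp] at h
      simp only [map_pow] at h
      linear_combination h
end
end

section
/- Let k be a field of characteristic p > 0, let q ≥ 2 be an integer that is not a multiple of p, let a ∈ k*, and let n ≥ 1. Consider the k-algebra homomorphism ρ* : k[y₁,…,y_{n+1}] → k[x₁,…,xₙ] defined by y₁ ↦ x₁^{p²}, y₂ ↦ a·x₁^{pq} + x₁, and y_{i+1} ↦ x_i for 2 ≤ i ≤ n (the comorphism of ρ : 𝔸ⁿ → 𝔸^{n+1}, (x₁,…,xₙ) ↦ (x₁^{p²}, a·x₁^{pq} + x₁, x₂,…,xₙ)). Then ρ* is surjective (ρ is a closed embedding), its kernel is the principal ideal generated by f = y₁ + a^{p²}·y₁^{pq} − y₂^{p²}, the polynomial f is not a variable of the k-algebra k[y₁,…,y_{n+1}], and in particular there is no k-algebra automorphism α of k[y₁,…,y_{n+1}] such that ρ* ∘ α equals the comorphism of the standard embedding (x₁,…,xₙ) ↦ (x₁,…,xₙ,0) (i.e., ρ is not equivalent to the standard embedding 𝔸ⁿ ↪ 𝔸^{n+1}). -/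
open MvPolynomial

noncomputable section

/-- The comorphism of `ρ : 𝔸ⁿ → 𝔸ⁿ⁺¹`,
`(x₁,…,xₙ) ↦ (x₁^{p²}, a·x₁^{pq} + x₁, x₂,…,xₙ)`: it sends
`y₁ ↦ x₁^{p²}`, `y₂ ↦ a·x₁^{pq} + x₁` and `y_{i+1} ↦ x_i` for `2 ≤ i`. -/
def rhoCharPStar (k : Type*) [Field k] (p q n : ℕ) (hn : 0 < n) (a : k) :
    MvPolynomial (Fin (n + 1)) k →ₐ[k] MvPolynomial (Fin n) k :=
  aeval (fun i : Fin (n + 1) =>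
    if (i : ℕ) = 0 then X ⟨0, hn⟩ ^ p ^ 2
    else if (i : ℕ) = 1 then C a * X ⟨0, hn⟩ ^ (p * q) + X ⟨0, hn⟩
    else X ⟨(i : ℕ) - 1, by have := i.isLt; omega⟩)

/-- The comorphism of the standard embedding `𝔸ⁿ ↪ 𝔸ⁿ⁺¹`,
`(x₁,…,xₙ) ↦ (x₁,…,xₙ,0)`: it sends `y_i ↦ x_i` for `i ≤ n` and `y_{n+1} ↦ 0`. -/
def stdEmbStar (k : Type*) [Field k] (n : ℕ) :
    MvPolynomial (Fin (n + 1)) k →ₐ[k] MvPolynomial (Fin n) k :=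
  aeval (fun i : Fin (n + 1) =>
    if h : (i : ℕ) < n then X ⟨(i : ℕ), h⟩ else 0)

theorem aux_degreeOf_pderiv {k : Type*} [Field k] {σ : Type*} (i j : σ) (hij : j ≠ i)
    (f : MvPolynomial σ k) : degreeOf j (pderiv i f) ≤ degreeOf j f := by
  classical
  rw [degreeOf_le_iff]
  intro m hm
  rw [mem_support_iff, coeff_pderiv] at hm
  have h1 : m + Finsupp.single i 1 ∈ f.support := by
    rw [mem_support_iff]
    intro h
    apply hm
    rw [h]
    simp
  have h2 := (degreeOf_le_iff (n := j) (f := f)).1 le_rfl _ h1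
  have h3 : (m + Finsupp.single i 1 : σ →₀ ℕ) j = m j := by
    simp [Finsupp.single_apply, Ne.symm hij]
  omega

theorem aux_frob {R : Type*} [CommRing R] (p q : ℕ) [Fact p.Prime] [CharP R p] (a y z : R) :
    y + a ^ p ^ 2 * y ^ (p * q) - z ^ p ^ 2 = y - (z ^ p - a ^ p * y ^ q) ^ p := by
  rw [sub_pow_char]
  ring

theorem aux_degree {k : Type*} [Field k] {σ : Type*} (p q : ℕ) [Fact p.Prime] [CharP k p]
    (hq : 2 ≤ q) (hpq : ¬ p ∣ q) (a : k) (ha : a ≠ 0) (c : k) (hc : c ≠ 0) (i j : σ)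
    (hij : j ≠ i) (Y Z : MvPolynomial σ k)
    (h : Y - (Z ^ p - C a ^ p * Y ^ q) ^ p = C c * X i) : degreeOf j Y = 0 := by
  classical
  set g := Z ^ p - C a ^ p * Y ^ q with hg
  have hp2 : 2 ≤ p := (Fact.out : p.Prime).two_le
  have hdp : ∀ f : MvPolynomial σ k, pderiv i (f ^ p) = 0 := by
    intro f
    rw [pderiv_pow, CharP.cast_eq_zero]
    simp
  have hdY : pderiv i Y = C c := by
    have := congrArg (pderiv i) h
    rw [map_sub, hdp, pderiv_C_mul, pderiv_X_self] at this
    simpa using this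
  have hY : Y ≠ 0 := by
    rintro rfl
    rw [map_zero] at hdY
    exact hc (C_injective σ k (by simpa using hdY.symm))
  have hqk : (q : k) ≠ 0 := by
    rwa [Ne, CharP.cast_eq_zero_iff k p]
  have hdg : pderiv i g = C (-(a ^ p * q * c)) * Y ^ (q - 1) := by
    rw [hg, map_sub, hdp, ← C_pow, pderiv_C_mul, pderiv_pow, hdY]
    simp only [C_neg, C_mul, map_natCast]
    ring
  have h1 : (q - 1) * degreeOf j Y ≤ degreeOf j g := by
    have := aux_degreeOf_pderiv i j hij g
    rw [hdg, degreeOf_C_mul _ _ (mem_nonZeroDivisors_of_ne_zero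
      (neg_ne_zero.2 (mul_ne_zero (mul_ne_zero (pow_ne_zero _ ha) hqk) hc))),
      degreeOf_pow_eq _ _ _ hY] at this
    exact this
  have hX : degreeOf j (C c * X i : MvPolynomial σ k) = 0 := by
    rw [degreeOf_C_mul _ _ (mem_nonZeroDivisors_of_ne_zero hc), degreeOf_X_of_ne hij]
  by_cases hg0 : g = 0
  · have : Y = C c * X i := by
      rw [← h, hg0, zero_pow (by omega), sub_zero]
    rw [this, hX]
  have h2 : p * degreeOf j g ≤ degreeOf j Y := by
    rw [← degreeOf_pow_eq _ _ _ hg0]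
    have : g ^ p = Y - C c * X i := by rw [← h]; ring
    rw [this]
    have := degreeOf_sub_le j Y (C c * X i)
    rw [hX] at this
    simpa using this
  have h3 : degreeOf j Y ≤ (q - 1) * degreeOf j Y := Nat.le_mul_of_pos_left _ (by omega)
  have h4 : 2 * degreeOf j g ≤ p * degreeOf j g := Nat.mul_le_mul_right _ hp2
  omega

theorem aux_not_variable {k : Type*} [Field k] (p q n : ℕ) [Fact p.Prime] [CharP k p]
    (hn : 0 < n) (hq : 2 ≤ q) (hpq : ¬ p ∣ q) (a : k) (ha : a ≠ 0) (c : k) (hc : c ≠ 0)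
    (i : Fin (n + 1))
    (α : MvPolynomial (Fin (n + 1)) k ≃ₐ[k] MvPolynomial (Fin (n + 1)) k)
    (h : α ((X 0 : MvPolynomial (Fin (n + 1)) k) + C (a ^ p ^ 2) * X 0 ^ (p * q) -
          X 1 ^ p ^ 2) = C c * X i) : False := by
  have hp2 : 2 ≤ p := (Fact.out : p.Prime).two_le
  have h10 : (1 : Fin (n + 1)) ≠ 0 := by
    intro h
    have := congrArg Fin.val h
    rw [Fin.val_one', Nat.mod_eq_of_lt (by omega)] at this
    simp at this
  have hα : ∀ r : k, α (C r) = C r := fun r => α.commutes r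
  have h' := h
  rw [C_pow, aux_frob, map_sub, map_pow, map_sub, map_mul, map_pow, map_pow, map_pow, hα] at h'
  have hsup : α (X 0) ∈ supported k ({i} : Set (Fin (n + 1))) := by
    rw [mem_supported]
    intro j hj
    by_contra hji
    exact mem_vars_iff_degreeOf_ne_zero.1 (Finset.mem_coe.1 hj)
      (aux_degree p q hq hpq a ha c hc i j hji _ _ h')
  rw [supported_eq_adjoin_X, Set.image_singleton, Algebra.adjoin_singleton_eq_range_aeval] at hsup
  obtain ⟨P, hP⟩ := hsup
  have hP : Polynomial.aeval (X i : MvPolynomial (Fin (n + 1)) k) P = α (X 0) := hP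
  have hXi : α (C c⁻¹ * ((X 0 : MvPolynomial (Fin (n + 1)) k) + C (a ^ p ^ 2) * X 0 ^ (p * q) -
          X 1 ^ p ^ 2)) = X i := by
    rw [map_mul, hα, h, ← mul_assoc, ← C_mul, inv_mul_cancel₀ hc, C_1, one_mul]
  rw [← hXi, ← AlgEquiv.coe_toAlgHom, Polynomial.aeval_algHom_apply, AlgEquiv.coe_toAlgHom] at hP
  have hP2 := α.injective hP
  have hP3 := congrArg (aeval (fun j : Fin (n + 1) =>
    if j = 0 then (0 : Polynomial k) else Polynomial.X)) hP2
  rw [← Polynomial.aeval_algHom_apply] at hP3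
  have hpq0 : p * q ≠ 0 := Nat.mul_ne_zero (by omega) (by omega)
  simp only [map_mul, map_add, map_sub, map_pow, aeval_X, algHom_C, if_true, if_neg h10,
    zero_pow hpq0, mul_zero, zero_add, zero_sub] at hP3
  rw [← Polynomial.comp_eq_aeval, Polynomial.comp_eq_zero_iff] at hP3
  have hP0 : P = 0 := by
    rcases hP3 with hP3 | ⟨-, hP3⟩
    · exact hP3
    · exfalso
      have := congrArg (fun f => Polynomial.coeff f (p ^ 2)) hP3
      have hp0 : p ≠ 0 := by omega
      simp [Polynomial.coeff_C, hp0, Polynomial.algebraMap_eq] at this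
      exact hc this
  rw [hP0, map_zero] at hP2
  exact X_ne_zero _ hP2.symm

theorem aux_dvd {R : Type*} [CommRing R] (p q : ℕ) [Fact p.Prime] [CharP R p] (a y z : R) :
    (y - (z ^ p - a ^ p * y ^ q) ^ p ∣ y - (z - a * (z ^ p - a ^ p * y ^ q) ^ q) ^ p ^ 2) ∧
    (y - (z ^ p - a ^ p * y ^ q) ^ p ∣
      z - (a * (z - a * (z ^ p - a ^ p * y ^ q) ^ q) ^ (p * q)
        + (z - a * (z ^ p - a ^ p * y ^ q) ^ q))) := by
  have hp2 : 2 ≤ p := (Fact.out : p.Prime).two_le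
  set u := z ^ p - a ^ p * y ^ q with hu
  set s := z - a * u ^ q with hs
  have h1 : y - u ^ p ∣ u - s ^ p := by
    have e : u - s ^ p = - (a ^ p * (y ^ q - (u ^ p) ^ q)) := by
      rw [hs, sub_pow_char, mul_pow, hu]
      ring
    rw [e]
    exact (Dvd.dvd.mul_left (sub_dvd_pow_sub_pow _ _ q) _).neg_right
  constructor
  · have e : y - s ^ p ^ 2 = (y - u ^ p) + (u - s ^ p) ^ p := by
      rw [sub_pow_char u]
      ring
    rw [e]
    exact dvd_add dvd_rfl (dvd_pow h1 (by omega))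
  · have e : z - (a * s ^ (p * q) + s) = a * (u ^ q - (s ^ p) ^ q) := by
      have : z = s + a * u ^ q := by rw [hs]; ring
      rw [this]
      ring
    rw [e]
    exact Dvd.dvd.mul_left (h1.trans (sub_dvd_pow_sub_pow _ _ q)) _

/-- **Proposition 3.13 (Blanc–van Santen).** Let `k` be a field of characteristic `p > 0`,
`q ≥ 2` not a multiple of `p`, `a ∈ k*` and `n ≥ 1`. Then
`ρ : 𝔸ⁿ ↪ 𝔸ⁿ⁺¹`, `(x₁,…,xₙ) ↦ (x₁^{p²}, a·x₁^{pq}+x₁, x₂,…,xₙ)`, is a closed embedding whose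
image is the hypersurface `f = y₁ + a^{p²}·y₁^{pq} − y₂^{p²} = 0`; the polynomial `f` is not
a variable of `k[y₁,…,y_{n+1}]`, and `ρ` is not equivalent to the standard embedding. -/
theorem charP_nonstandard_embedding
    (k : Type*) [Field k] (p : ℕ) [CharP k p] (hp : 0 < p)
    (q : ℕ) (hq : 2 ≤ q) (hpq : ¬ p ∣ q) (a : k) (ha : a ≠ 0)
    (n : ℕ) (hn : 0 < n) :
    Function.Surjective (rhoCharPStar k p q n hn a) ∧
    RingHom.ker (rhoCharPStar k p q n hn a) =
      Ideal.span {(X 0 : MvPolynomial (Fin (n + 1)) k) + C (a ^ p ^ 2) * X 0 ^ (p * q) -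
        X 1 ^ p ^ 2} ∧
    (¬ ∃ α : MvPolynomial (Fin (n + 1)) k ≃ₐ[k] MvPolynomial (Fin (n + 1)) k,
        α ((X 0 : MvPolynomial (Fin (n + 1)) k) + C (a ^ p ^ 2) * X 0 ^ (p * q) -
          X 1 ^ p ^ 2) = X 0) ∧
    (¬ ∃ α : MvPolynomial (Fin (n + 1)) k ≃ₐ[k] MvPolynomial (Fin (n + 1)) k,
        (rhoCharPStar k p q n hn a).comp α.toAlgHom = stdEmbStar k n) := by
  have hprime : p.Prime := (CharP.char_is_prime_or_zero k p).resolve_right (by omega)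
  have : Fact p.Prime := ⟨hprime⟩
  have hv1 : ((1 : Fin (n + 1)) : ℕ) = 1 := by
    rw [Fin.val_one', Nat.mod_eq_of_lt (by omega)]
  have r0 : rhoCharPStar k p q n hn a (X 0) = X ⟨0, hn⟩ ^ p ^ 2 := by
    simp [rhoCharPStar]
  have r1 : rhoCharPStar k p q n hn a (X 1) = C a * X ⟨0, hn⟩ ^ (p * q) + X ⟨0, hn⟩ := by
    simp [rhoCharPStar, hn, hn.ne']
  have r2 : ∀ i : Fin n, (i : ℕ) ≠ 0 → rhoCharPStar k p q n hn a (X i.succ) = X i := by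
    intro i hi
    simp [rhoCharPStar, hi]
  have rC : ∀ c : k, rhoCharPStar k p q n hn a (C c) = C c := fun c =>
    (rhoCharPStar k p q n hn a).commutes c
  have rx : rhoCharPStar k p q n hn a (X 1 - C a * (X 1 ^ p - C a ^ p * X 0 ^ q) ^ q)
      = X ⟨0, hn⟩ := by
    simp only [map_sub, map_mul, map_pow, r0, r1, rC]
    rw [add_pow_char]
    ring
  have rf : rhoCharPStar k p q n hn a ((X 0 : MvPolynomial (Fin (n + 1)) k) +
      C (a ^ p ^ 2) * X 0 ^ (p * q) - X 1 ^ p ^ 2) = 0 := by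
    simp only [map_sub, map_add, map_mul, map_pow, r0, r1, rC]
    rw [add_pow_char_pow]
    ring
  have hker : RingHom.ker (rhoCharPStar k p q n hn a) =
      Ideal.span {(X 0 : MvPolynomial (Fin (n + 1)) k) + C (a ^ p ^ 2) * X 0 ^ (p * q) -
        X 1 ^ p ^ 2} := by
    apply le_antisymm
    · intro h hh
      have hd := aux_dvd p q (C a) (X 0 : MvPolynomial (Fin (n + 1)) k) (X 1)
      rw [← aux_frob, ← C_pow] at hd
      set f := (X 0 : MvPolynomial (Fin (n + 1)) k) + C (a ^ p ^ 2) * X 0 ^ (p * q) -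
        X 1 ^ p ^ 2 with hf
      let S : MvPolynomial (Fin n) k →ₐ[k] MvPolynomial (Fin (n + 1)) k :=
        aeval (fun i : Fin n => if (i : ℕ) = 0 then
          X 1 - C a * (X 1 ^ p - C a ^ p * X 0 ^ q) ^ q else X i.succ)
      have S0 : S (X ⟨0, hn⟩) = X 1 - C a * (X 1 ^ p - C a ^ p * X 0 ^ q) ^ q := by
        simp [S]
      have S1 : ∀ i : Fin n, (i : ℕ) ≠ 0 → S (X i) = X i.succ := by
        intro i hi
        simp [S, hi]
      have SC : ∀ c : k, S (C c) = C c := fun c => S.commutes c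
      have key : (Ideal.Quotient.mkₐ k (Ideal.span {f})) =
          (Ideal.Quotient.mkₐ k (Ideal.span {f})).comp
            (S.comp (rhoCharPStar k p q n hn a)) := by
        apply MvPolynomial.algHom_ext
        intro i
        simp only [AlgHom.comp_apply, Ideal.Quotient.mkₐ_eq_mk]
        rw [Ideal.Quotient.eq, Ideal.mem_span_singleton]
        induction i using Fin.cases with
        | zero =>
          rw [r0, map_pow, S0]
          exact hd.1
        | succ i =>
          by_cases hi : (i : ℕ) = 0
          · have e : i.succ = 1 := by
              apply Fin.ext
              rw [hv1, Fin.val_succ, hi]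
            rw [e, r1, map_add, map_mul, map_pow, SC, S0]
            exact hd.2
          · rw [r2 i hi, S1 i hi, sub_self]
            exact dvd_zero _
      have := DFunLike.congr_fun key h
      simp only [AlgHom.comp_apply, Ideal.Quotient.mkₐ_eq_mk] at this
      rw [RingHom.mem_ker] at hh
      rw [hh, map_zero, map_zero] at this
      exact Ideal.Quotient.eq_zero_iff_mem.1 this
    · rw [Ideal.span_singleton_le_iff_mem, RingHom.mem_ker]
      exact rf
  refine ⟨?_, hker, ?_, ?_⟩
  · rw [← AlgHom.range_eq_top, eq_top_iff, ← MvPolynomial.adjoin_range_X, Algebra.adjoin_le_iff]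
    rintro _ ⟨i, rfl⟩
    by_cases hi : (i : ℕ) = 0
    · have e : i = ⟨0, hn⟩ := Fin.ext hi
      rw [e]
      exact ⟨_, rx⟩
    · exact ⟨_, r2 i hi⟩
  · rintro ⟨α, hα⟩
    exact aux_not_variable p q n hn hq hpq a ha 1 one_ne_zero 0 α (by rw [hα, C_1, one_mul])
  · rintro ⟨α, hα⟩
    have h0 := DFunLike.congr_fun hα (X (Fin.last n))
    have h1 : rhoCharPStar k p q n hn a (α (X (Fin.last n))) = 0 := by
      have h2 : rhoCharPStar k p q n hn a (α (X (Fin.last n))) =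
        stdEmbStar k n (X (Fin.last n)) := h0
      rw [h2]
      simp [stdEmbStar]
    have h2 : α (X (Fin.last n)) ∈ RingHom.ker (rhoCharPStar k p q n hn a) := h1
    rw [hker, Ideal.mem_span_singleton] at h2
    set f := (X 0 : MvPolynomial (Fin (n + 1)) k) + C (a ^ p ^ 2) * X 0 ^ (p * q) -
        X 1 ^ p ^ 2 with hf
    obtain ⟨w, hw⟩ := h2
    have h3 : X (Fin.last n) = α.symm f * α.symm w := by
      rw [← map_mul, ← hw, AlgEquiv.symm_apply_apply]
    have hirr : Irreducible (X (Fin.last n) : MvPolynomial (Fin (n + 1)) k) := X_prime.irreducible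
    rcases hirr.isUnit_or_isUnit h3 with hu | hu
    · have h4 := (hu.map α).map (rhoCharPStar k p q n hn a)
      rw [AlgEquiv.apply_symm_apply, rf] at h4
      exact not_isUnit_zero h4
    · obtain ⟨r, hr, hr'⟩ := isUnit_iff_eq_C_of_isReduced.1 hu
      refine aux_not_variable p q n hn hq hpq a ha r⁻¹ (inv_ne_zero hr.ne_zero) (Fin.last n)
        α.symm ?_
      rw [← hf, h3, hr', mul_comm (α.symm f), ← mul_assoc, ← C_mul,
        inv_mul_cancel₀ hr.ne_zero, C_1, one_mul]
end
end
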